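/- arXiv:1406.1887 — 7 statements merged into one kernel-verified Lean document; each statement's English description precedes it below -/
import Mathlib

section
/- There exists n₀ such that for every even n ≥ n₀ and every positive integer m the following holds: if F ⊆ 2^[n] is 2-Sperner and the number of sets G ⊆ [n] with G ∉ F and |G| = n/2 is at least m, then |F| ≤ Σ(n,2) − 1.9·m/n. -/
/-- A family is 2-Sperner if it contains no chain of three of its members. -/
def TwoSperner {n : ℕ} (F : Finset (Finset (Fin n))) : Prop :=
  ∀ A ∈ F, ∀ B ∈ F, ∀ C ∈ F, ¬ (A ⊂ B ∧ B ⊂ C)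

def Sigma2 (n : ℕ) : ℕ := n.choose (n / 2) + n.choose (n / 2 + 1)

def levelFam (n k : ℕ) : Finset (Finset (Fin n)) :=
  Finset.univ.filter (fun S => S.card = k)

/-!
The minimal members of a 2-Sperner family form an antichain, and so do the others, so the
LYM inequality gives `∑ A ∈ F, 1 / C(n, |A|) ≤ 2`. Let `n = 2k`, `a = C(n, k)`, `b = C(n, k + 1)`,
and let `M` be the number of `k`-sets missing from `F`. The members of size `k` contribute
`1 - M / a` to the sum and each other member contributes at least `1 / b`, so there are at most
`b * (1 + M / a)` of the latter. Since `b / a = k / (k + 1)`, this yields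
`|F| ≤ a + b - M / (k + 1)`, and `1 / (k + 1) = 2 / (n + 2) ≥ 1.9 / n` as soon as `n ≥ 38`.
-/

open Finset

theorem isAntichain_not_minimal_of_no_three_chain {α : Type*} [PartialOrder α] {s : Set α}
    (hs : ∀ a ∈ s, ∀ b ∈ s, ∀ c ∈ s, ¬ (a < b ∧ b < c)) :
    IsAntichain (· ≤ ·) {a | a ∈ s ∧ ¬ Minimal (· ∈ s) a} := by
  rintro b ⟨hb, hb_min⟩ c ⟨hc, -⟩ hbc hle
  obtain ⟨a, hab, ha⟩ := (not_minimal_iff_exists_lt hb).1 hb_min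
  exact hs a ha b hb c hc ⟨hab, hle.lt_of_ne hbc⟩

section LYM

variable {𝕜 α : Type*} [Fintype α] {F : Finset (Finset α)}

theorem sum_inv_choose_le_two_of_no_three_chain [Semifield 𝕜] [LinearOrder 𝕜]
    [IsStrictOrderedRing 𝕜] (hF : ∀ A ∈ F, ∀ B ∈ F, ∀ C ∈ F, ¬ (A ⊂ B ∧ B ⊂ C)) :
    ∑ A ∈ F, ((Fintype.card α).choose #A : 𝕜)⁻¹ ≤ 2 := by
  classical
  have minimal_le : ∑ A ∈ F with Minimal (· ∈ F) A, ((Fintype.card α).choose #A : 𝕜)⁻¹ ≤ 1 := by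
    refine lubell_yamamoto_meshalkin_inequality_sum_inv_choose ?_
    exact (setOfPred_minimal_antichain (· ∈ F)).subset fun A hA => (mem_filter.1 hA).2
  have not_minimal_le :
      ∑ A ∈ F with ¬ Minimal (· ∈ F) A, ((Fintype.card α).choose #A : 𝕜)⁻¹ ≤ 1 := by
    refine lubell_yamamoto_meshalkin_inequality_sum_inv_choose ?_
    exact (isAntichain_not_minimal_of_no_three_chain (s := (F : Set (Finset α))) hF).subset
      fun A hA => mem_filter.1 hA
  rw [← sum_filter_add_sum_filter_not F (Minimal (· ∈ F)), ← one_add_one_eq_two]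
  exact add_le_add minimal_le not_minimal_le

theorem card_le_mul_sum_inv_choose [Semifield 𝕜] [LinearOrder 𝕜] [IsStrictOrderedRing 𝕜] {b : ℕ}
    (hb : ∀ A ∈ F, (Fintype.card α).choose #A ≤ b) :
    (#F : 𝕜) ≤ b * ∑ A ∈ F, ((Fintype.card α).choose #A : 𝕜)⁻¹ := by
  rw [mul_sum, ← nsmul_one]
  refine card_nsmul_le_sum _ _ _ fun A hA => ?_
  have choose_pos : (0 : 𝕜) < (Fintype.card α).choose #A :=
    Nat.cast_pos.2 (Nat.choose_pos A.card_le_univ)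
  rw [← div_eq_mul_inv, one_le_div₀ choose_pos]
  exact Nat.cast_le.2 (hb A hA)

theorem sum_slice_inv_choose [DivisionSemiring 𝕜] (F : Finset (Finset α)) (k : ℕ) :
    ∑ A ∈ F # k, ((Fintype.card α).choose #A : 𝕜)⁻¹ = #(F # k) / (Fintype.card α).choose k := by
  rw [div_eq_mul_inv, ← nsmul_eq_mul]
  exact sum_eq_card_nsmul fun A hA => by rw [(mem_slice.1 hA).2]

theorem card_filter_card_ne_le [Field 𝕜] [LinearOrder 𝕜] [IsStrictOrderedRing 𝕜] {b k : ℕ} {c : 𝕜}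
    (hb : ∀ j ≠ k, (Fintype.card α).choose j ≤ b)
    (hF : ∑ A ∈ F, ((Fintype.card α).choose #A : 𝕜)⁻¹ ≤ c) :
    (#{A ∈ F | #A ≠ k} : 𝕜) ≤ b * (c - #(F # k) / (Fintype.card α).choose k) := by
  have sum_off_slice : ∑ A ∈ F with #A ≠ k, ((Fintype.card α).choose #A : 𝕜)⁻¹ ≤
      c - #(F # k) / (Fintype.card α).choose k := by
    rw [← sum_slice_inv_choose, le_sub_iff_add_le']
    exact (sum_filter_add_sum_filter_not F (#· = k) _).trans_le hF
  calc (#{A ∈ F | #A ≠ k} : 𝕜)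
      ≤ b * ∑ A ∈ F with #A ≠ k, ((Fintype.card α).choose #A : 𝕜)⁻¹ :=
        card_le_mul_sum_inv_choose fun A hA => hb _ (mem_filter.1 hA).2
    _ ≤ b * (c - #(F # k) / (Fintype.card α).choose k) := by gcongr

end LYM

theorem choose_le_choose_of_le_half {n i j : ℕ} (hij : i ≤ j) (hj : j ≤ n / 2) :
    n.choose i ≤ n.choose j := by
  induction j, hij using Nat.le_induction with
  | base => rfl
  | succ j _ ih => exact (ih (by lia)).trans (Nat.choose_le_succ_of_lt_half_left hj)

theorem choose_two_mul_le_choose_succ_of_ne {k j : ℕ} (hj : j ≠ k) :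
    (2 * k).choose j ≤ (2 * k).choose (k + 1) := by
  rcases lt_or_ge (2 * k) j with hout | hle
  · simp [Nat.choose_eq_zero_of_lt hout]
  rw [Nat.choose_symm_of_eq_add (show 2 * k = (k + 1) + (k - 1) by lia)]
  rcases lt_or_gt_of_ne hj with hlt | hgt
  · exact choose_le_choose_of_le_half (by lia) (by lia)
  · rw [← Nat.choose_symm hle]
    exact choose_le_choose_of_le_half (by lia) (by lia)

theorem choose_two_mul_succ_eq {𝕜 : Type*} [Field 𝕜] [CharZero 𝕜] (k : ℕ) :
    ((2 * k).choose (k + 1) : 𝕜) = (2 * k).choose k * (k / (k + 1)) := by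
  have absorption : (2 * k).choose (k + 1) * (k + 1) = (2 * k).choose k * k := by
    simpa [two_mul] using Nat.choose_succ_right_eq (2 * k) k
  rw [← mul_div_assoc, eq_div_iff (Nat.cast_add_one_ne_zero k)]
  exact_mod_cast absorption

theorem card_le_of_sum_inv_choose_le_two {𝕜 α : Type*} [Field 𝕜] [LinearOrder 𝕜]
    [IsStrictOrderedRing 𝕜] [Fintype α] {F : Finset (Finset α)} {k : ℕ}
    (hα : Fintype.card α = 2 * k)
    (hF : ∑ A ∈ F, ((Fintype.card α).choose #A : 𝕜)⁻¹ ≤ 2) :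
    (#F : 𝕜) ≤ (2 * k).choose k + (2 * k).choose (k + 1)
      - ((2 * k).choose k - #(F # k)) / (k + 1) := by
  have off_slice := card_filter_card_ne_le
    (fun j hj => hα ▸ choose_two_mul_le_choose_succ_of_ne hj) hF
  have card_split : #(F # k) + #{A ∈ F | #A ≠ k} = #F := card_filter_add_card_filter_not (#· = k)
  have choose_ne_zero : ((2 * k).choose k : 𝕜) ≠ 0 :=
    Nat.cast_ne_zero.2 (Nat.choose_pos (by lia)).ne'
  have succ_ne_zero : (k + 1 : 𝕜) ≠ 0 := Nat.cast_add_one_ne_zero k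
  rw [hα] at off_slice
  calc (#F : 𝕜) = #(F # k) + #{A ∈ F | #A ≠ k} := by exact_mod_cast card_split.symm
    _ ≤ #(F # k) + (2 * k).choose (k + 1) * (2 - #(F # k) / (2 * k).choose k) := by gcongr
    _ = (2 * k).choose k + (2 * k).choose (k + 1)
        - ((2 * k).choose k - #(F # k)) / (k + 1) := by
      rw [choose_two_mul_succ_eq]
      field_simp
      ring

theorem card_levelFam_sdiff_add_card_slice {n : ℕ} (F : Finset (Finset (Fin n))) (k : ℕ) :
    #(levelFam n k \ F) + #(F # k) = n.choose k := by
  have level_eq : levelFam n k = powersetCard k univ := by ext; simp [levelFam]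
  have slice_eq : F # k = levelFam n k ∩ F := by ext; simp [levelFam, mem_slice, and_comm]
  rw [slice_eq, card_sdiff_add_card_inter, level_eq, card_powersetCard, card_fin]

theorem two_sperner_stab_even_missing_general {n : ℕ} (hn : Even n) {F : Finset (Finset (Fin n))}
    (hF : TwoSperner F) :
    (#F : ℝ) ≤ Sigma2 n - 2 * #(levelFam n (n / 2) \ F) / (n + 2) := by
  obtain ⟨k, rfl⟩ := even_iff_exists_two_mul.1 hn
  have half : 2 * k / 2 = k := by lia
  have missing : ((2 * k).choose k - #(F # k) : ℝ) = #(levelFam (2 * k) k \ F) :=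
    sub_eq_of_eq_add (by exact_mod_cast (card_levelFam_sdiff_add_card_slice F k).symm)
  have bound := card_le_of_sum_inv_choose_le_two (𝕜 := ℝ) (Fintype.card_fin _)
    (sum_inv_choose_le_two_of_no_three_chain hF)
  have coefficient : (2 * #(levelFam (2 * k) k \ F) / ((2 * k : ℕ) + 2) : ℝ) =
      #(levelFam (2 * k) k \ F) / (k + 1) := by
    push_cast
    field_simp
  rw [Sigma2, half, coefficient, Nat.cast_add]
  exact missing ▸ bound

theorem nineteen_tenths_mul_div_le {n m M : ℝ} (hn : 38 ≤ n) (hm : 0 ≤ m) (hmM : m ≤ M) :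
    1.9 * m / n ≤ 2 * M / (n + 2) := by
  rw [div_le_div_iff₀ (by linarith) (by linarith)]
  nlinarith

/-- For even `n`: if `F` is 2-Sperner and at least `m` sets of size `n/2` are missing from
`F`, then `|F| ≤ Σ(n,2) − 1.9·m/n`. -/
theorem two_sperner_stab_even_missing :
    ∃ n₀ : ℕ, ∀ n : ℕ, n₀ ≤ n → Even n → ∀ m : ℕ, 1 ≤ m →
      ∀ F : Finset (Finset (Fin n)), TwoSperner F →
      m ≤ (levelFam n (n / 2) \ F).card →
      (F.card : ℝ) ≤ (Sigma2 n : ℝ) - 1.9 * m / n := by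
  refine ⟨38, fun n hn he m _ F hF hm => ?_⟩
  exact (two_sperner_stab_even_missing_general he hF).trans <| sub_le_sub_left
    (nineteen_tenths_mul_div_le (mod_cast hn) m.cast_nonneg (mod_cast hm)) _
end

section
/- There exists n₀ such that for every even n ≥ n₀ and every positive integer m the following holds: if F ⊆ 2^[n] is 2-Sperner and the number of members F ∈ F with |F| ∉ {n/2−1, n/2, n/2+1} is at least m, then |F| ≤ Σ(n,2) − 1.9·m/n. -/
/-!
A family without three-member chains is the union of two antichains, so the LYM inequality gives
`∑ A ∈ F, 1 / C(2k, |A|) ≤ 2`. Multiply by `C(2k, k + 1)`. A member of size `k ± 1` then has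
weight `1`, one of size `k` falls short of `1` by `1 - C(2k, k + 1) / C(2k, k)`, and there are at
most `C(2k, k)` of the latter; this alone gives `|F| ≤ C(2k, k) + C(2k, k + 1)`. Every other member
has weight at least `C(2k, k + 1) / C(2k, k + 2) = 1 + 3 / (k - 1)`, and so lowers the bound by at
least `3 / (k - 1)`, which exceeds `1.9 / (2k)`.
-/

open Finset

/-- A subset of a preorder with no three-element chain. This is `TwoSperner` over an arbitrary
order; for families of finsets, `<` is `⊂`. -/
def ThreeChainFree {β : Type*} [Preorder β] (s : Set β) : Prop :=
  ∀ a ∈ s, ∀ b ∈ s, ∀ c ∈ s, ¬ (a < b ∧ b < c)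

theorem ThreeChainFree.isAntichain_not_minimal {β : Type*} [PartialOrder β] {s : Set β}
    (hs : ThreeChainFree s) : IsAntichain (· ≤ ·) {b ∈ s | ¬ Minimal (· ∈ s) b} := by
  rintro b ⟨hb, hb_min⟩ c ⟨hc, -⟩ hne hbc
  obtain ⟨a, hab, ha⟩ := exists_lt_of_not_minimal hb hb_min
  exact hs a ha b hb c hc ⟨hab, hbc.lt_of_ne hne⟩

theorem monotoneOn_choose_Iic_half (n : ℕ) : MonotoneOn n.choose (Set.Iic (n / 2)) :=
  monotoneOn_of_le_add_one Set.ordConnected_Iic fun _ _ _ hr =>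
    Nat.choose_le_succ_of_lt_half_left hr

theorem choose_le_choose_of_le_two_mul {n i j : ℕ} (hj : n ≤ 2 * j) (hij : j ≤ i ∨ i + j ≤ n) :
    n.choose i ≤ n.choose j := by
  obtain hni | hin := lt_or_ge n i
  · simp [Nat.choose_eq_zero_of_lt hni]
  have hmono {r : ℕ} (hr : r ≤ n - j) : n.choose r ≤ n.choose (n - j) :=
    have hhalf : n - j ≤ n / 2 := by lia
    monotoneOn_choose_Iic_half n (hr.trans hhalf) hhalf hr
  rw [← Nat.choose_symm (show j ≤ n by lia)]
  obtain hji | hij := hij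
  · rw [← Nat.choose_symm hin]
    exact hmono (by lia)
  · exact hmono (by lia)

section OrderedField

variable {𝕜 : Type*} [Field 𝕜] [LinearOrder 𝕜] [IsStrictOrderedRing 𝕜]

theorem ThreeChainFree.sum_inv_choose_card_le_two {α : Type*} [Fintype α]
    {F : Finset (Finset α)} (hF : ThreeChainFree (F : Set (Finset α))) :
    ∑ A ∈ F, ((Fintype.card α).choose #A : 𝕜)⁻¹ ≤ 2 := by
  classical
  have minimal_le_one : ∑ A ∈ F with Minimal (· ∈ F) A,
      ((Fintype.card α).choose #A : 𝕜)⁻¹ ≤ 1 :=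
    lubell_yamamoto_meshalkin_inequality_sum_inv_choose <|
      (setOfPred_minimal_antichain (· ∈ F)).subset fun _ hA => (mem_filter.mp hA).2
  have not_minimal_le_one : ∑ A ∈ F with ¬ Minimal (· ∈ F) A,
      ((Fintype.card α).choose #A : 𝕜)⁻¹ ≤ 1 :=
    lubell_yamamoto_meshalkin_inequality_sum_inv_choose <|
      hF.isAntichain_not_minimal.subset fun _ hA => mem_filter.mp hA
  rw [← sum_filter_add_sum_filter_not F (Minimal (· ∈ F))]
  linarith

theorem choose_two_mul_succ_div_choose_add_two {k : ℕ} (hk : 2 ≤ k) :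
    ((2 * k).choose (k + 1) / (2 * k).choose (k + 2) : 𝕜) = 1 + 3 / (k - 1) := by
  have hrec : ((2 * k).choose (k + 2) * (k + 2) : 𝕜) = (2 * k).choose (k + 1) * (k - 1) := by
    have := Nat.choose_succ_right_eq (2 * k) (k + 1)
    rw [show 2 * k - (k + 1) = k - 1 by lia] at this
    rw [← Nat.cast_pred (by lia)]
    exact_mod_cast this
  have hpos : (0 : 𝕜) < (2 * k).choose (k + 2) := mod_cast Nat.choose_pos (by lia)
  have hk_pos : (0 : 𝕜) < k - 1 := sub_pos.mpr (mod_cast hk)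
  field_simp
  linear_combination -hrec

theorem one_add_three_div_le_choose_div_choose {k i : ℕ} (hk : 2 ≤ k) (hi : i ≤ 2 * k)
    (hout : i ≠ k - 1 ∧ i ≠ k ∧ i ≠ k + 1) :
    1 + 3 / (k - 1) ≤ ((2 * k).choose (k + 1) / (2 * k).choose i : 𝕜) := by
  have hpos : 0 < (2 * k).choose i := Nat.choose_pos hi
  have hle : (2 * k).choose i ≤ (2 * k).choose (k + 2) :=
    choose_le_choose_of_le_two_mul (by lia) (by lia)
  rw [← choose_two_mul_succ_div_choose_add_two hk]
  gcongr

theorem one_add_ite_le_choose_div_choose_add_ite {k i : ℕ} (hk : 2 ≤ k) (hi : i ≤ 2 * k) :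
    1 + 3 / (k - 1) * (if i ≠ k - 1 ∧ i ≠ k ∧ i ≠ k + 1 then 1 else 0) ≤
      ((2 * k).choose (k + 1) / (2 * k).choose i : 𝕜) +
        (1 - (2 * k).choose (k + 1) / (2 * k).choose k) * (if i = k then 1 else 0) := by
  have hne : ((2 * k).choose (k + 1) : 𝕜) ≠ 0 := mod_cast Nat.choose_ne_zero (by lia)
  by_cases hout : i ≠ k - 1 ∧ i ≠ k ∧ i ≠ k + 1
  · simpa [hout] using one_add_three_div_le_choose_div_choose (𝕜 := 𝕜) hk hi hout
  obtain rfl | rfl | rfl : i = k - 1 ∨ i = k ∨ i = k + 1 := by lia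
  · have hsymm : (2 * k).choose (k - 1) = (2 * k).choose (k + 1) :=
      Nat.choose_symm_of_eq_add (by lia)
    simp [hsymm, hne, show k - 1 ≠ k by lia]
  · simp
  · simp [hne]

end OrderedField

theorem two_sperner_stab_even_outside_general {α : Type*} [Fintype α] {k : ℕ}
    (hα : Fintype.card α = 2 * k) (hk : 2 ≤ k) {F : Finset (Finset α)}
    (hF : ThreeChainFree (F : Set (Finset α))) :
    (#F : ℝ) ≤ (2 * k).choose k + (2 * k).choose (k + 1) -
      3 / (k - 1) * #{A ∈ F | #A ≠ k - 1 ∧ #A ≠ k ∧ #A ≠ k + 1} := by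
  set outside := {A ∈ F | #A ≠ k - 1 ∧ #A ≠ k ∧ #A ≠ k + 1}
  set N₀ : ℝ := ((2 * k).choose k : ℝ)
  set N₁ : ℝ := ((2 * k).choose (k + 1) : ℝ)
  have hN₀ : 0 < N₀ := Nat.cast_pos.mpr (Nat.choose_pos (by lia))
  have hN₁ : N₁ ≤ N₀ := Nat.cast_le.mpr (Nat.choose_le_centralBinom (k + 1) k)
  have hmiddle : (#(F.slice k) : ℝ) ≤ N₀ := by
    simpa only [hα] using Nat.cast_le (α := ℝ).mpr (sized_slice (𝒜 := F) (r := k)).card_le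
  have hlym : ∑ A ∈ F, ((2 * k).choose #A : ℝ)⁻¹ ≤ 2 := hα ▸ hF.sum_inv_choose_card_le_two
  have hcoeff : 0 ≤ 1 - N₁ / N₀ := sub_nonneg.mpr ((div_le_one hN₀).mpr hN₁)
  rw [le_sub_iff_add_le]
  calc (#F : ℝ) + 3 / (k - 1) * #outside
      = ∑ A ∈ F, (1 + 3 / (k - 1) *
          (if #A ≠ k - 1 ∧ #A ≠ k ∧ #A ≠ k + 1 then 1 else 0) : ℝ) := by
        rw [sum_add_distrib, ← mul_sum, sum_boole]; simp [outside]
    _ ≤ ∑ A ∈ F, (N₁ / (2 * k).choose #A + (1 - N₁ / N₀) * (if #A = k then 1 else 0)) :=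
        sum_le_sum fun A _ =>
          one_add_ite_le_choose_div_choose_add_ite hk (hα ▸ card_le_univ A)
    _ = N₁ * ∑ A ∈ F, ((2 * k).choose #A : ℝ)⁻¹ + (1 - N₁ / N₀) * #(F.slice k) := by
        simp only [sum_add_distrib, ← mul_sum, sum_boole, slice, div_eq_mul_inv]
    _ ≤ N₁ * 2 + (1 - N₁ / N₀) * N₀ := by gcongr
    _ = N₀ + N₁ := by field_simp; ring

/-- For even `n`: if `F` is 2-Sperner and at least `m` of its members have size different
from `n/2 − 1`, `n/2` and `n/2 + 1`, then `|F| ≤ Σ(n,2) − 1.9·m/n`. -/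
theorem two_sperner_stab_even_outside :
    ∃ n₀ : ℕ, ∀ n : ℕ, n₀ ≤ n → Even n → ∀ m : ℕ, 1 ≤ m →
      ∀ F : Finset (Finset (Fin n)), TwoSperner F →
      m ≤ (F.filter (fun A =>
            A.card ≠ n / 2 - 1 ∧ A.card ≠ n / 2 ∧ A.card ≠ n / 2 + 1)).card →
      (F.card : ℝ) ≤ (Sigma2 n : ℝ) - 1.9 * m / n := by
  refine ⟨4, fun n hn hev m _ F hF hm => ?_⟩
  obtain ⟨k, rfl⟩ := hev.two_dvd
  rw [Nat.mul_div_cancel_left k two_pos] at hm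
  have hk : (0 : ℝ) < k - 1 := sub_pos.mpr (mod_cast (by lia : 1 < k))
  have hgain : 1.9 * m / (2 * k : ℕ) ≤ (3 / (k - 1) * m : ℝ) := by
    rw [mul_div_right_comm]
    gcongr ?_ * (m : ℝ)
    push_cast
    rw [div_le_div_iff₀ (by linarith) hk]
    linarith
  calc (#F : ℝ) ≤ _ :=
        two_sperner_stab_even_outside_general (Fintype.card_fin _) (by lia) hF
    _ ≤ (2 * k).choose k + (2 * k).choose (k + 1) - 3 / (k - 1) * m := by gcongr
    _ ≤ _ := by
        simp only [Sigma2, Nat.mul_div_cancel_left k two_pos, Nat.cast_add]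
        linarith
end

section
/- Let n and k be integers with 1 ≤ ⌊n/2⌋ ≤ k ≤ n, and let G be a nonempty Sperner family of subsets of [n] with |F| ≥ k for every F ∈ G. Let x ≥ k−1 be the real number satisfying x(x−1)⋯(x−k+1)/k! = |G|. Then |Δ_{k−1}(G)| ≥ x(x−1)⋯(x−k+2)/(k−1)!. -/
/-- The generalized binomial coefficient `C(x,j) = x(x−1)⋯(x−j+1)/j!` for real `x`. -/
noncomputable def genChoose (x : ℝ) (j : ℕ) : ℝ :=
  (descPochhammer ℝ j).eval x / (Nat.factorial j)

/-- The `j`-shadow of a family `G` of subsets of `[n]`. -/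
def shadowAt (n j : ℕ) (G : Finset (Finset (Fin n))) : Finset (Finset (Fin n)) :=
  Finset.univ.filter (fun S => S.card = j ∧ ∃ F ∈ G, S ⊂ F)

/-!
Two facts combine.

* By the local LYM inequality, a level above `⌊n/2⌋` is no larger than its shadow, and for an
  antichain that shadow is disjoint from the level below. Pushing the levels above `k` down one
  after the other turns `G` into the `k`-uniform family `falling k G`, which is at least as large
  and whose shadow lies in `Δ_{k-1}(G)`.
* Lovász's form of the Kruskal–Katona theorem holds for real `x`, by Keevash's induction through
  links. The statement that inducts well is the ratio bound `(r + 1) |𝒜| ≤ (x - r) |∂𝒜|` for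
  `(r + 1)`-uniform `𝒜` with `|∂𝒜| < C(x, r)`. For each point `v`, the links of `v` in `𝒜` and `∂𝒜`
  satisfy the analogous bound: by induction if the link in `∂𝒜` is small, and otherwise because a
  large link leaves few sets of `∂𝒜` avoiding `v`. Summing over `v` double counts both families.
-/

open Finset
open scoped FinsetFamily

section GenChoose

lemma genChoose_zero (x : ℝ) : genChoose x 0 = 1 := by simp [genChoose]

lemma succ_mul_genChoose_succ (x : ℝ) (r : ℕ) :
    (r + 1) * genChoose x (r + 1) = (x - r) * genChoose x r := by
  simp only [genChoose, descPochhammer_succ_eval, Nat.factorial_succ]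
  push_cast
  field_simp

lemma succ_mul_genChoose_succ_eq_mul_genChoose_sub_one (x : ℝ) (r : ℕ) :
    (r + 1) * genChoose x (r + 1) = x * genChoose (x - 1) r := by
  simp only [genChoose, descPochhammer_succ_left, Nat.factorial_succ, Polynomial.eval_mul,
    Polynomial.eval_comp, Polynomial.eval_sub, Polynomial.eval_X, Polynomial.eval_one]
  push_cast
  field_simp

end GenChoose

section Links

variable {α : Type*} [DecidableEq α] {𝒜 : Finset (Finset α)} {r : ℕ}

lemma card_memberSubfamily (v : α) (𝒜 : Finset (Finset α)) :
    #(𝒜.memberSubfamily v) = #{s ∈ 𝒜 | v ∈ s} :=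
  card_image_of_injOn <| (erase_injOn' v).mono fun _ hs ↦ (mem_filter.1 hs).2

lemma sum_card_memberSubfamily {u : Finset α} (h𝒜 : (𝒜 : Set (Finset α)).Sized r)
    (hu : ∀ s ∈ 𝒜, s ⊆ u) : ∑ v ∈ u, #(𝒜.memberSubfamily v) = r * #𝒜 :=
  calc ∑ v ∈ u, #(𝒜.memberSubfamily v)
    _ = ∑ v ∈ u, #{s ∈ 𝒜 | v ∈ s} := by simp only [card_memberSubfamily]
    _ = ∑ s ∈ 𝒜, #{v ∈ u | v ∈ s} := sum_card_bipartiteAbove_eq_sum_card_bipartiteBelow _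
    _ = ∑ _s ∈ 𝒜, r := sum_congr rfl fun s hs ↦ by
      rw [filter_mem_eq_inter, inter_eq_right.2 (hu s hs), h𝒜 hs]
    _ = r * #𝒜 := by rw [sum_const, smul_eq_mul, mul_comm]

lemma sized_memberSubfamily (h𝒜 : (𝒜 : Set (Finset α)).Sized (r + 1)) (v : α) :
    (𝒜.memberSubfamily v : Set (Finset α)).Sized r := by
  intro _ hs
  obtain ⟨hvs, hv⟩ := mem_memberSubfamily.1 hs
  simpa only [card_insert_of_notMem hv, Nat.add_right_cancel_iff] using h𝒜 hvs

lemma shadow_memberSubfamily_subset (v : α) (𝒜 : Finset (Finset α)) :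
    ∂ (𝒜.memberSubfamily v) ⊆ (∂ 𝒜).memberSubfamily v := by
  intro t ht
  obtain ⟨s, hs, a, ha, rfl⟩ := mem_shadow_iff.1 ht
  obtain ⟨hvs, hv⟩ := mem_memberSubfamily.1 hs
  have hva : v ≠ a := fun h ↦ hv (h ▸ ha)
  refine mem_memberSubfamily.2 ⟨?_, fun h ↦ hv (mem_of_mem_erase h)⟩
  rw [← erase_insert_of_ne hva]
  exact erase_mem_shadow hvs (mem_insert_of_mem ha)

lemma memberSubfamily_subset_nonMemberSubfamily_shadow (v : α) (𝒜 : Finset (Finset α)) :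
    𝒜.memberSubfamily v ⊆ (∂ 𝒜).nonMemberSubfamily v := by
  intro s hs
  obtain ⟨hvs, hv⟩ := mem_memberSubfamily.1 hs
  exact mem_nonMemberSubfamily.2 ⟨mem_shadow_iff_insert_mem.2 ⟨v, hv, hvs⟩, hv⟩

lemma card_memberSubfamily_add_card_memberSubfamily_shadow_le (v : α) (𝒜 : Finset (Finset α)) :
    #(𝒜.memberSubfamily v) + #((∂ 𝒜).memberSubfamily v) ≤ #(∂ 𝒜) := by
  have hle := card_le_card (memberSubfamily_subset_nonMemberSubfamily_shadow v 𝒜)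
  have hsplit := card_memberSubfamily_add_card_nonMemberSubfamily v (∂ 𝒜)
  lia

lemma shadow_nonempty (h𝒜 : (𝒜 : Set (Finset α)).Sized (r + 1)) (hne : 𝒜.Nonempty) :
    (∂ 𝒜).Nonempty := by
  obtain ⟨s, hs⟩ := hne
  obtain ⟨a, ha⟩ : s.Nonempty := card_pos.1 (by rw [h𝒜 hs]; exact r.succ_pos)
  exact ⟨_, erase_mem_shadow hs ha⟩

end Links

section Lovasz

variable {α : Type*} [DecidableEq α] {𝒜 : Finset (Finset α)} {r : ℕ} {x : ℝ}

lemma succ_mul_card_memberSubfamily_le_of_genChoose_le {v : α} (hx : 0 ≤ x)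
    (hshadow : #(∂ 𝒜) ≤ genChoose x (r + 1))
    (hlink : genChoose (x - 1) r ≤ #((∂ 𝒜).memberSubfamily v)) :
    (r + 1) * (#(𝒜.memberSubfamily v) : ℝ) ≤ (x - 1 - r) * #((∂ 𝒜).memberSubfamily v) := by
  have hsplit : (#(𝒜.memberSubfamily v) + #((∂ 𝒜).memberSubfamily v) : ℝ) ≤ #(∂ 𝒜) :=
    mod_cast card_memberSubfamily_add_card_memberSubfamily_shadow_le v 𝒜
  have htotal : (r + 1) * (#(𝒜.memberSubfamily v) + #((∂ 𝒜).memberSubfamily v) : ℝ)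
      ≤ x * #((∂ 𝒜).memberSubfamily v) :=
    calc (r + 1) * (#(𝒜.memberSubfamily v) + #((∂ 𝒜).memberSubfamily v) : ℝ)
      _ ≤ (r + 1) * genChoose x (r + 1) := by gcongr; exact hsplit.trans hshadow
      _ = x * genChoose (x - 1) r := succ_mul_genChoose_succ_eq_mul_genChoose_sub_one x r
      _ ≤ x * #((∂ 𝒜).memberSubfamily v) := by gcongr
  linarith

lemma add_two_mul_card_le_mul_card_shadow_of_memberSubfamily {c : ℝ}
    (h𝒜 : (𝒜 : Set (Finset α)).Sized (r + 2))
    (hlink : ∀ v, (r + 1) * (#(𝒜.memberSubfamily v) : ℝ) ≤ c * #((∂ 𝒜).memberSubfamily v)) :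
    (r + 2) * (#𝒜 : ℝ) ≤ c * #(∂ 𝒜) := by
  have hsub : ∀ s ∈ 𝒜, s ⊆ 𝒜.sup id := fun s hs ↦ le_sup (f := id) hs
  have hsub' : ∀ t ∈ ∂ 𝒜, t ⊆ 𝒜.sup id := fun t ht ↦
    let ⟨s, hs, hts⟩ := exists_subset_of_mem_shadow ht
    hts.trans (hsub s hs)
  have hcount := sum_card_memberSubfamily h𝒜 hsub
  have hcount' := sum_card_memberSubfamily h𝒜.shadow hsub'
  have hsum := sum_le_sum fun v (_ : v ∈ 𝒜.sup id) ↦ hlink v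
  rw [← mul_sum, ← mul_sum, ← Nat.cast_sum, ← Nat.cast_sum, hcount, hcount'] at hsum
  push_cast [Nat.add_sub_cancel] at hsum
  refine le_of_mul_le_mul_left (a := (r + 1 : ℝ)) ?_ (by positivity)
  linarith

theorem succ_mul_card_le_mul_card_shadow (h𝒜 : (𝒜 : Set (Finset α)).Sized (r + 1))
    (hx : r ≤ x) (hshadow : #(∂ 𝒜) < genChoose x r) :
    (r + 1) * (#𝒜 : ℝ) ≤ (x - r) * #(∂ 𝒜) := by
  induction r generalizing 𝒜 x with
  | zero =>
    have hempty : 𝒜 = ∅ := by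
      by_contra hne
      have hpos := card_pos.2 (shadow_nonempty h𝒜 (nonempty_iff_ne_empty.2 hne))
      rw [genChoose_zero, Nat.cast_lt_one] at hshadow
      exact hpos.ne' hshadow
    simp [hempty]
  | succ r ih =>
    push_cast at hx ⊢
    have hlink (v : α) : (r + 1) * (#(𝒜.memberSubfamily v) : ℝ)
        ≤ (x - 1 - r) * #((∂ 𝒜).memberSubfamily v) := by
      obtain hlarge | hsmall := le_or_gt (genChoose (x - 1) r) #((∂ 𝒜).memberSubfamily v)
      · exact succ_mul_card_memberSubfamily_le_of_genChoose_le (by linarith) hshadow.le hlarge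
      · have hcard : (#(∂ (𝒜.memberSubfamily v)) : ℝ) ≤ #((∂ 𝒜).memberSubfamily v) :=
          mod_cast card_le_card (shadow_memberSubfamily_subset v 𝒜)
        refine (ih (sized_memberSubfamily h𝒜 v) (by linarith) (hcard.trans_lt hsmall)).trans ?_
        exact mul_le_mul_of_nonneg_left hcard (by linarith)
    have hratio := add_two_mul_card_le_mul_card_shadow_of_memberSubfamily h𝒜 hlink
    linarith

theorem genChoose_le_card_shadow (h𝒜 : (𝒜 : Set (Finset α)).Sized (r + 1)) (hne : 𝒜.Nonempty)
    (hx : r ≤ x) (hcard : genChoose x (r + 1) ≤ #𝒜) : genChoose x r ≤ #(∂ 𝒜) := by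
  by_contra! hshadow
  have hratio := succ_mul_card_le_mul_card_shadow h𝒜 hx hshadow
  have hpos : 0 < (r + 1) * (#𝒜 : ℝ) := mul_pos (by positivity) (mod_cast hne.card_pos)
  have hxr : 0 < x - r := pos_of_mul_pos_left (hpos.trans_le hratio) (Nat.cast_nonneg _)
  refine lt_irrefl ((r + 1) * (#𝒜 : ℝ)) ?_
  calc (r + 1) * (#𝒜 : ℝ)
    _ ≤ (x - r) * #(∂ 𝒜) := hratio
    _ < (x - r) * genChoose x r := by gcongr
    _ = (r + 1) * genChoose x (r + 1) := (succ_mul_genChoose_succ x r).symm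
    _ ≤ (r + 1) * #𝒜 := by gcongr

end Lovasz

section Falling

variable {α : Type*} [DecidableEq α] [Fintype α] {𝒜 : Finset (Finset α)} {k : ℕ}

lemma card_le_card_shadow (h𝒜 : (𝒜 : Set (Finset α)).Sized (k + 1))
    (hk : Fintype.card α ≤ 2 * k + 1) : #𝒜 ≤ #(∂ 𝒜) := by
  refine Nat.le_of_mul_le_mul_right (c := k + 1) ?_ k.succ_pos
  calc #𝒜 * (k + 1)
    _ ≤ #(∂ 𝒜) * (Fintype.card α - (k + 1) + 1) :=
      local_lubell_yamamoto_meshalkin_inequality_mul h𝒜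
    _ ≤ #(∂ 𝒜) * (k + 1) := by gcongr; lia

lemma card_filter_le_card_falling (h𝒜 : IsAntichain (· ⊆ ·) (𝒜 : Set (Finset α)))
    (hk : Fintype.card α ≤ 2 * k + 1) : #{s ∈ 𝒜 | k ≤ #s} ≤ #(falling k 𝒜) := by
  induction hd : Fintype.card α + 1 - k generalizing k with
  | zero =>
    have hempty : {s ∈ 𝒜 | k ≤ #s} = ∅ := filter_false_of_mem fun s _ ↦ by
      have hs := s.card_le_univ
      lia
    simp [hempty]
  | succ d ih =>
    have hlevels : {s ∈ 𝒜 | k ≤ #s} ⊆ 𝒜.slice k ∪ {s ∈ 𝒜 | k + 1 ≤ #s} := by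
      intro s
      simp only [mem_filter, mem_union, mem_slice]
      lia
    have hupper : #{s ∈ 𝒜 | k + 1 ≤ #s} ≤ #(∂ (falling (k + 1) 𝒜)) :=
      (ih (k := k + 1) (by lia) (by lia)).trans (card_le_card_shadow (sized_falling _ _) hk)
    calc #{s ∈ 𝒜 | k ≤ #s}
      _ ≤ #(𝒜.slice k) + #{s ∈ 𝒜 | k + 1 ≤ #s} :=
        (card_le_card hlevels).trans (card_union_le _ _)
      _ ≤ #(𝒜.slice k) + #(∂ (falling (k + 1) 𝒜)) := by gcongr
      _ = #(falling k 𝒜) := by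
        rw [← card_union_of_disjoint (IsAntichain.disjoint_slice_shadow_falling h𝒜),
          slice_union_shadow_falling_succ]

end Falling

lemma shadow_falling_subset_shadowAt (n r : ℕ) (G : Finset (Finset (Fin n))) :
    ∂ (falling (r + 1) G) ⊆ shadowAt n r G := by
  intro t ht
  obtain ⟨s, hs, a, ha, rfl⟩ := mem_shadow_iff.1 ht
  obtain ⟨⟨F, hF, hsF⟩, hcard⟩ := mem_falling.1 hs
  have hr : #(s.erase a) = r := by rw [card_erase_of_mem ha, hcard, Nat.add_sub_cancel]
  exact mem_filter.2 ⟨mem_univ _, hr, F, hF, (erase_ssubset ha).trans_subset hsF⟩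

/-- Lemma (generalized Lovász shadow bound): if `G` is a nonempty Sperner family of sets
of size at least `k` (with `⌊n/2⌋ ≤ k ≤ n`, `1 ≤ ⌊n/2⌋`) and `x ≥ k−1` is the real with
`C(x,k) = |G|`, then `|Δ_{k−1}(G)| ≥ C(x,k−1)`. -/
theorem shadow_bound (n k : ℕ) (h1 : 1 ≤ n / 2) (h2 : n / 2 ≤ k) (h3 : k ≤ n)
    (G : Finset (Finset (Fin n))) (hne : G.Nonempty)
    (hsp : IsAntichain (· ⊆ ·) (G : Set (Finset (Fin n))))
    (hsize : ∀ F ∈ G, k ≤ F.card)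
    (x : ℝ) (hx : (k : ℝ) - 1 ≤ x) (hxc : genChoose x k = G.card) :
    genChoose x (k - 1) ≤ ((shadowAt n (k - 1) G).card : ℝ) := by
  obtain ⟨r, rfl⟩ := Nat.exists_eq_add_of_le' (h1.trans h2)
  have hfalling : #G ≤ #(falling (r + 1) G) := by
    simpa only [filter_true_of_mem hsize] using
      card_filter_le_card_falling hsp (by rw [Fintype.card_fin]; lia : _ ≤ 2 * (r + 1) + 1)
  have hne' : (falling (r + 1) G).Nonempty := card_pos.1 (hne.card_pos.trans_le hfalling)
  have hxr : (r : ℝ) ≤ x := by simpa using hx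
  calc genChoose x r
    _ ≤ #(∂ (falling (r + 1) G)) :=
      genChoose_le_card_shadow (sized_falling _ _) hne' hxr (hxc.trans_le (mod_cast hfalling))
    _ ≤ #(shadowAt n r G) := mod_cast card_le_card (shadow_falling_subset_shadowAt n r G)
end

section
/- Let l ≥ 2 be an integer and let m₁, m₂ > 0 be reals with m = m₁ + m₂. If x(l,m) ≤ 2l − 1, then g(l,m₁) + g(l,m₂) ≥ g(l,m). -/
attribute [local instance] Classical.propDecidable

/-- `x(l,m)`: the unique real `x ≥ l−1` with `C(x,l) = m` (for `m > 0`). -/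
noncomputable def xval (l : ℕ) (m : ℝ) : ℝ :=
  if h : ∃ x : ℝ, (l : ℝ) - 1 ≤ x ∧ genChoose x l = m then h.choose else 0

/-- `g(l,m) = C(x(l,m), l−1) − C(x(l,m), l)`. -/
noncomputable def gval (l : ℕ) (m : ℝ) : ℝ :=
  genChoose (xval l m) (l - 1) - genChoose (xval l m) l

/-!
For `x = x(l,m)`, the recurrence `l * C(x,l) = (x - l + 1) * C(x,l-1)` turns the definition of `g`
into `g(l,m) / m = l / (x - l + 1) - 1`. As `x(l,m)` increases with `m`, the ratio `g(l,m) / m`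
decreases, and a function whose ratio to its argument decreases on the positive numbers
is subadditive there.
-/

open Filter Set

theorem map_add_le_add_of_antitoneOn_div_self {K : Type*} [Field K] [LinearOrder K]
    [IsStrictOrderedRing K] {f : K → K} (hf : AntitoneOn (fun x ↦ f x / x) (Ioi 0))
    {a b : K} (ha : 0 < a) (hb : 0 < b) : f (a + b) ≤ f a + f b := by
  have hab : 0 < a + b := add_pos ha hb
  have ha_ratio : f (a + b) / (a + b) ≤ f a / a := hf ha hab (le_add_of_nonneg_right hb.le)
  have hb_ratio : f (a + b) / (a + b) ≤ f b / b := hf hb hab (le_add_of_nonneg_left ha.le)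
  calc
    f (a + b) = a * (f (a + b) / (a + b)) + b * (f (a + b) / (a + b)) := by
      rw [← add_mul, mul_div_cancel₀ _ hab.ne']
    _ ≤ a * (f a / a) + b * (f b / b) := by gcongr
    _ = f a + f b := by rw [mul_div_cancel₀ _ ha.ne', mul_div_cancel₀ _ hb.ne']

theorem genChoose_succ_mul (x : ℝ) (k : ℕ) :
    genChoose x (k + 1) * (k + 1) = genChoose x k * (x - k) := by
  simp only [genChoose, descPochhammer_succ_eval, Nat.factorial_succ, Nat.cast_mul,
    Nat.cast_add_one]
  field_simp

theorem continuous_genChoose (l : ℕ) : Continuous (genChoose · l) :=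
  (Polynomial.continuous _).div_const _

theorem monotoneOn_genChoose (l : ℕ) : MonotoneOn (genChoose · l) (Ici ((l : ℝ) - 1)) :=
  fun _ hx _ hy hxy ↦
    div_le_div_of_nonneg_right (monotoneOn_descPochhammer_eval l hx hy hxy) (Nat.cast_nonneg _)

section

variable {l : ℕ}

theorem genChoose_sub_one_self (hl : l ≠ 0) : genChoose ((l : ℝ) - 1) l = 0 := by
  have hroot := descPochhammer_eval_coe_nat_of_lt (R := ℝ) (Nat.sub_one_lt hl)
  rw [Nat.cast_pred (Nat.pos_of_ne_zero hl)] at hroot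
  rw [genChoose, hroot, zero_div]

theorem tendsto_genChoose_atTop (hl : l ≠ 0) : Tendsto (genChoose · l) atTop atTop := by
  have hdeg : 0 < (descPochhammer ℝ l).degree :=
    Polynomial.natDegree_pos_iff_degree_pos.mp <| by
      rw [descPochhammer_natDegree]
      exact Nat.pos_of_ne_zero hl
  have hlead : 0 ≤ (descPochhammer ℝ l).leadingCoeff := by
    rw [(monic_descPochhammer ℝ l).leadingCoeff]
    exact zero_le_one
  exact ((descPochhammer ℝ l).tendsto_atTop_of_leadingCoeff_nonneg hdeg hlead).atTop_div_const
    (Nat.cast_pos.mpr l.factorial_pos)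

theorem exists_genChoose_eq (hl : l ≠ 0) {m : ℝ} (hm : 0 ≤ m) :
    ∃ x : ℝ, (l : ℝ) - 1 ≤ x ∧ genChoose x l = m :=
  isPreconnected_Ici.intermediate_value_Ici self_mem_Ici (le_principal_iff.mpr (Ici_mem_atTop _))
    (continuous_genChoose l).continuousOn (tendsto_genChoose_atTop hl)
    (show genChoose ((l : ℝ) - 1) l ≤ m from (genChoose_sub_one_self hl).trans_le hm)

theorem xval_spec (hl : l ≠ 0) {m : ℝ} (hm : 0 ≤ m) :
    (l : ℝ) - 1 ≤ xval l m ∧ genChoose (xval l m) l = m := by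
  have hex := exists_genChoose_eq hl hm
  rw [xval, dif_pos hex]
  exact hex.choose_spec

theorem sub_one_lt_xval (hl : l ≠ 0) {m : ℝ} (hm : 0 < m) : (l : ℝ) - 1 < xval l m := by
  obtain ⟨hle, hval⟩ := xval_spec hl hm.le
  refine hle.lt_of_ne fun heq ↦ hm.ne ?_
  rw [← hval, ← heq, genChoose_sub_one_self hl]

theorem monotoneOn_xval (hl : l ≠ 0) : MonotoneOn (xval l) (Ici 0) := by
  intro a ha b hb hab
  obtain ⟨ha_le, ha_val⟩ := xval_spec hl ha
  obtain ⟨hb_le, hb_val⟩ := xval_spec hl hb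
  by_contra! hlt
  have hba : b ≤ a := by
    simpa only [ha_val, hb_val] using monotoneOn_genChoose l hb_le ha_le hlt.le
  exact hlt.ne (congrArg (xval l) (hba.antisymm hab))

theorem gval_div_self (hl : l ≠ 0) {m : ℝ} (hm : 0 < m) :
    gval l m / m = l / (xval l m - (l - 1)) - 1 := by
  have hval := (xval_spec hl hm.le).2
  have hpos : 0 < xval l m - (l - 1) := sub_pos.mpr (sub_one_lt_xval hl hm)
  have hrec : m * l = genChoose (xval l m) (l - 1) * (xval l m - (l - 1)) := by
    simpa only [← Nat.cast_pred (R := ℝ) (Nat.pos_of_ne_zero hl), ← Nat.cast_add_one,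
      Nat.sub_one_add_one hl, hval] using genChoose_succ_mul (xval l m) (l - 1)
  rw [gval, hval, sub_div, div_self hm.ne', sub_left_inj, div_eq_div_iff hm.ne' hpos.ne', ← hrec,
    mul_comm]

theorem antitoneOn_gval_div_self (hl : l ≠ 0) : AntitoneOn (fun m ↦ gval l m / m) (Ioi 0) := by
  intro a ha b hb hab
  have hpos : 0 < xval l a - (l - 1) := sub_pos.mpr (sub_one_lt_xval hl ha)
  have hmono : xval l a ≤ xval l b :=
    (monotoneOn_xval hl).mono Ioi_subset_Ici_self ha hb hab
  simp only [gval_div_self hl ha, gval_div_self hl hb]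
  gcongr

theorem gval_superadditive_general (hl : l ≠ 0) {m₁ m₂ : ℝ} (h₁ : 0 < m₁) (h₂ : 0 < m₂) :
    gval l (m₁ + m₂) ≤ gval l m₁ + gval l m₂ :=
  map_add_le_add_of_antitoneOn_div_self (antitoneOn_gval_div_self hl) h₁ h₂

end

/-- Superadditivity: if `m = m₁ + m₂` and `x(l,m) ≤ 2l − 1`, then
`g(l,m₁) + g(l,m₂) ≥ g(l,m)`. -/
theorem gval_superadditive (l : ℕ) (hl : 2 ≤ l) (m₁ m₂ : ℝ) (h₁ : 0 < m₁) (h₂ : 0 < m₂)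
    (hx : xval l (m₁ + m₂) ≤ 2 * (l : ℝ) - 1) :
    gval l (m₁ + m₂) ≤ gval l m₁ + gval l m₂ :=
  gval_superadditive_general (by lia) h₁ h₂
end

section
/- Let n ≥ 2 and let F ⊆ 2^[n] \ {∅, [n]} be a butterfly-free family, and set M = {M ∈ F : there exist F, F′ ∈ F with F ⊊ M ⊊ F′}. Then Σ_{F ∈ F \ M} 1/C(n,|F|) + Σ_{M ∈ M} (1 + ((|M|−1)(n−|M|−1) − 1)/(|M|(n−|M|))) · 1/C(n,|M|) ≤ 2. -/
def IsButterfly {n : ℕ} (S : Finset (Finset (Fin n))) : Prop :=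
  ∃ A B C D : Finset (Fin n), S = {A, B, C, D} ∧ A ≠ B ∧ C ≠ D ∧
    A ⊂ C ∧ A ⊂ D ∧ B ⊂ C ∧ B ⊂ D

def ButterflyFree {n : ℕ} (F : Finset (Finset (Fin n))) : Prop :=
  ∀ S ⊆ F, ¬ IsButterfly S

/-!
A numbering of `[n]` determines the maximal chain of its initial segments; let `G` be the set of
members of `F` on the chain of a uniformly random numbering, and `M` the set of middle elements.
As `M` is an antichain, `|G ∩ M| ≤ 1`, and if `G ∩ M = ∅` then `|G| ≤ 2`; in both cases
`|G| + |G ∩ M| (2 - |G|) ≤ 2`. Taking expectations,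
`∑_{X ∈ F} P(X) + ∑_{X ∈ M} (2 P(X) - ∑_{Y ∈ F} P(X, Y)) ≤ 2`, where `P(X) = 1 / C(n, |X|)`.
By butterfly-freeness `X ∈ M` is comparable to only three members of `F`: itself, a single `A ⊂ X`
and a single `B ⊃ X`. Given that `X` is an initial segment, so is `A` with probability
`1 / C(|X|, |A|) ≤ 1 / |X|`, and so is `B` with probability
`1 / C(n - |X|, |B| - |X|) ≤ 1 / (n - |X|)`.
-/

section Numbering

open Finset Numbering
open scoped Nat

theorem le_choose_of_pos_of_lt {n k : ℕ} (hk : 0 < k) (hkn : k < n) : n ≤ n.choose k := by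
  induction n generalizing k with
  | zero => omega
  | succ n ih =>
    obtain ⟨k, rfl⟩ := Nat.exists_eq_add_one.2 hk
    rcases (Nat.lt_succ_iff.1 hkn).lt_or_eq with hlt | rfl
    · have hpos : 0 < n.choose k := Nat.choose_pos (by omega)
      have hle : n ≤ n.choose (k + 1) := ih k.succ_pos hlt
      rw [Nat.choose_succ_succ']
      omega
    · simp

variable {α : Type*} [DecidableEq α] {s t : Finset α}

theorem card_subtype_mem_of_subset (hst : s ⊆ t) : #(s.subtype (· ∈ t)) = #s := by
  rw [card_subtype, filter_true_of_mem hst]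

variable [Fintype α]

theorem isPrefix_prefixedEquiv_fst_iff (hst : s ⊆ t) (f : prefixed t) :
    (prefixedEquiv t f).1.IsPrefix (s.subtype (· ∈ t)) ↔ IsPrefix f.1 s := by
  simp only [IsPrefix, mem_subtype, card_subtype_mem_of_subset hst, Subtype.forall]
  refine ⟨fun h x ↦ ?_, fun h x _ ↦ h x⟩
  by_cases hx : x ∈ t
  · exact h x hx
  · have hle : #t ≤ f.1 x := not_lt.1 ((mem_prefixed.1 f.2 x).not.1 hx)
    exact iff_of_false (fun hxs ↦ hx (hst hxs)) (((card_le_card hst).trans hle).not_gt)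

theorem card_prefixed_inter_prefixed (hst : s ⊆ t) :
    #(prefixed s ∩ prefixed t) = (#s)! * (#t - #s)! * (Fintype.card α - #t)! := by
  calc #(prefixed s ∩ prefixed t)
      = #((prefixed s).subtype (· ∈ prefixed t)) := by rw [card_subtype, filter_mem_eq_inter]
    _ = #(prefixed (s.subtype (· ∈ t)) ×ˢ (univ : Finset (Numbering ↑(tᶜ)))) :=
      card_equiv (prefixedEquiv t) fun f ↦ by
        simp [isPrefix_prefixedEquiv_fst_iff hst]
    _ = (#s)! * (#t - #s)! * (Fintype.card α - #t)! := by
      simp [card_product, card_prefixed, card_subtype_mem_of_subset hst]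

theorem card_prefixed_inter_prefixed_mul_choose (hst : s ⊆ t) :
    #(prefixed s ∩ prefixed t) * (#t).choose #s = #(prefixed t) := by
  rw [card_prefixed_inter_prefixed hst, card_prefixed,
    ← Nat.choose_mul_factorial_mul_factorial (card_le_card hst)]
  ring

theorem card_prefixed_inter_prefixed_mul_choose_compl (hst : s ⊆ t) :
    #(prefixed s ∩ prefixed t) * (#sᶜ).choose (#t - #s) = #(prefixed s) := by
  have card_sub : Fintype.card α - #s - (#t - #s) = Fintype.card α - #t := by
    have := card_le_card hst
    omega
  rw [card_prefixed_inter_prefixed hst, card_prefixed, card_compl,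
    ← Nat.choose_mul_factorial_mul_factorial (Nat.sub_le_sub_right t.card_le_univ #s), card_sub]
  ring

theorem dens_le_dens_div_of_card_mul_le {Ω : Type*} [Fintype Ω] {S T : Finset Ω} {k : ℕ}
    (hk : 0 < k) (hST : #S * k ≤ #T) : S.dens ≤ T.dens / k := by
  rw [le_div_iff₀ (by exact_mod_cast hk), dens, dens, div_mul_eq_mul_div]
  gcongr
  exact_mod_cast hST

theorem dens_prefixed_inter_prefixed_le_of_nonempty (hs : s.Nonempty) (hst : s ⊂ t) :
    (prefixed s ∩ prefixed t).dens ≤ (prefixed t).dens / #t := by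
  refine dens_le_dens_div_of_card_mul_le (hs.mono hst.subset).card_pos ?_
  rw [← card_prefixed_inter_prefixed_mul_choose hst.subset]
  gcongr
  exact le_choose_of_pos_of_lt hs.card_pos (card_lt_card hst)

theorem dens_prefixed_inter_prefixed_le_of_ne_univ (hst : s ⊂ t) (ht : t ≠ univ) :
    (prefixed s ∩ prefixed t).dens ≤ (prefixed s).dens / #sᶜ := by
  have hcard_lt : #s < #t := card_lt_card hst
  have hcard_lt_univ : #t < Fintype.card α := (card_lt_iff_ne_univ t).2 ht
  refine dens_le_dens_div_of_card_mul_le (by rw [card_compl]; omega) ?_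
  rw [← card_prefixed_inter_prefixed_mul_choose_compl hst.subset]
  gcongr
  exact le_choose_of_pos_of_lt (by omega) (by rw [card_compl]; omega)

/-- The members of the family `F` on the maximal chain of initial segments of the numbering `f`:
the random chain whose size is averaged over all `f`. -/
def prefixesIn (F : Finset (Finset α)) (f : Numbering α) : Finset (Finset α) :=
  {X ∈ F | f.IsPrefix X}

theorem isChain_prefixesIn (F : Finset (Finset α)) (f : Numbering α) :
    IsChain (· ≤ ·) (prefixesIn F f : Set (Finset α)) := by
  intro X hX Y hY _
  have hXf : f.IsPrefix X := (mem_filter.1 hX).2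
  have hYf : f.IsPrefix Y := (mem_filter.1 hY).2
  exact (le_total #X #Y).imp (hXf.subset_of_card_le_card hYf) (hYf.subset_of_card_le_card hXf)

theorem prefixesIn_inter (F M : Finset (Finset α)) (f : Numbering α) :
    prefixesIn F f ∩ M = prefixesIn (F ∩ M) f :=
  filter_inter _ _ _

theorem sum_card_prefixesIn (F : Finset (Finset α)) :
    ∑ f : Numbering α, #(prefixesIn F f) = ∑ X ∈ F, #(prefixed X) :=
  sum_card_bipartiteAbove_eq_sum_card_bipartiteBelow fun (f : Numbering α) X ↦ f.IsPrefix X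

theorem sum_card_prefixesIn_mul_card_prefixesIn (F G : Finset (Finset α)) :
    ∑ f : Numbering α, #(prefixesIn F f) * #(prefixesIn G f) =
      ∑ X ∈ F, ∑ Y ∈ G, #(prefixed X ∩ prefixed Y) := by
  simp_rw [← card_product, prefixesIn, ← filter_product, ← sum_product', prefixed, ← filter_and]
  exact sum_card_bipartiteAbove_eq_sum_card_bipartiteBelow
    fun (f : Numbering α) (p : Finset α × Finset α) ↦ f.IsPrefix p.1 ∧ f.IsPrefix p.2

end Numbering

section Chain

open Finset

variable {α : Type*}

section Preorder

variable [Preorder α] [DecidableLT α] {F G : Finset α}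

/-- The elements of `F` that are the middle of a chain of three elements of `F`: the set `M` of the
theorem, for a family in any preorder. -/
def middleElements (F : Finset α) : Finset α :=
  {X ∈ F | ∃ A ∈ F, ∃ B ∈ F, A < X ∧ X < B}

theorem mem_middleElements {X : α} :
    X ∈ middleElements F ↔ X ∈ F ∧ ∃ A ∈ F, ∃ B ∈ F, A < X ∧ X < B :=
  mem_filter

theorem middleElements_subset (F : Finset α) : middleElements F ⊆ F :=
  filter_subset _ _

theorem middleElements_mono (hGF : G ⊆ F) : middleElements G ⊆ middleElements F := by
  intro X hX
  obtain ⟨hXG, A, hA, B, hB, hAXB⟩ := mem_middleElements.1 hX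
  exact mem_middleElements.2 ⟨hGF hXG, A, hGF hA, B, hGF hB, hAXB⟩

end Preorder

theorem card_le_two_of_isChain_of_middleElements_eq_empty [PartialOrder α] [DecidableLT α]
    {G : Finset α} (hG : IsChain (· ≤ ·) (G : Set α)) (hmid : middleElements G = ∅) : #G ≤ 2 := by
  classical
  by_contra! htwo
  have hne : G.Nonempty := card_pos.1 (by omega)
  obtain ⟨A, hA⟩ := G.exists_minimal hne
  obtain ⟨B, hB⟩ := G.exists_maximal hne
  obtain ⟨X, hX, hXAB⟩ :=
    exists_mem_notMem_of_card_lt_card ((card_le_two (a := A) (b := B)).trans_lt htwo)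
  simp only [mem_insert, mem_singleton, not_or] at hXAB
  have hAX : A < X := lt_of_le_of_ne' ((hG.total hA.prop hX).elim id (hA.le_of_le hX)) hXAB.1
  have hXB : X < B := lt_of_le_of_ne ((hG.total hX hB.prop).elim id (hB.le_of_ge hX)) hXAB.2
  exact notMem_empty X (hmid ▸ mem_middleElements.2 ⟨hX, A, hA.prop, B, hB.prop, hAX, hXB⟩)

end Chain

namespace ButterflyFree

open Finset Numbering

variable {n : ℕ} {F G : Finset (Finset (Fin n))} {A A' B B' C D X : Finset (Fin n)}

theorem eq_or_eq (hF : ButterflyFree F) (hA : A ∈ F) (hB : B ∈ F) (hC : C ∈ F) (hD : D ∈ F)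
    (hAC : A ⊂ C) (hAD : A ⊂ D) (hBC : B ⊂ C) (hBD : B ⊂ D) : A = B ∨ C = D := by
  by_contra! h
  refine hF {A, B, C, D} ?_ ⟨A, B, C, D, rfl, h.1, h.2, hAC, hAD, hBC, hBD⟩
  simp [insert_subset_iff, hA, hB, hC, hD]

theorem eq_of_ssubset_of_ssubset (hF : ButterflyFree F) (hA : A ∈ F) (hA' : A' ∈ F)
    (hX : X ∈ F) (hB : B ∈ F) (hAX : A ⊂ X) (hAX' : A' ⊂ X) (hXB : X ⊂ B) : A = A' :=
  (hF.eq_or_eq hA hA' hX hB hAX (hAX.trans hXB) hAX' (hAX'.trans hXB)).resolve_right hXB.ne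

theorem eq_of_ssuperset_of_ssuperset (hF : ButterflyFree F) (hA : A ∈ F) (hX : X ∈ F)
    (hB : B ∈ F) (hB' : B' ∈ F) (hAX : A ⊂ X) (hXB : X ⊂ B) (hXB' : X ⊂ B') : B = B' :=
  (hF.eq_or_eq hA hX hB hB' (hAX.trans hXB) (hAX.trans hXB') hXB hXB').resolve_left hAX.ne

theorem isAntichain_middleElements (hF : ButterflyFree F) :
    IsAntichain (· ≤ ·) (middleElements F : Set (Finset (Fin n))) := by
  intro X hX Y hY hne hXY
  obtain ⟨hXF, A, hA, -, -, hAX, -⟩ := mem_middleElements.1 hX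
  obtain ⟨hYF, -, -, B, hB, -, hYB⟩ := mem_middleElements.1 hY
  have hXY' : X ⊂ Y := hXY.lt_of_ne hne
  exact hAX.ne (hF.eq_of_ssubset_of_ssubset hA hXF hYF hB (hAX.trans hXY') hXY' hYB)

theorem card_add_two_mul_card_inter_middleElements_le (hF : ButterflyFree F) (hGF : G ⊆ F)
    (hG : IsChain (· ≤ ·) (G : Set (Finset (Fin n)))) :
    #G + 2 * #(G ∩ middleElements F) ≤ 2 + #(G ∩ middleElements F) * #G := by
  have hle_one : #(G ∩ middleElements F) ≤ 1 := card_le_one_iff_subsingleton.2 <| by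
    rw [coe_inter]
    exact inter_subsingleton_of_isChain_of_isAntichain hG hF.isAntichain_middleElements
  rcases Nat.le_one_iff_eq_zero_or_eq_one.1 hle_one with hzero | hone
  · have hmid : middleElements G = ∅ := subset_empty.1 <| card_eq_zero.1 hzero ▸
      subset_inter (middleElements_subset G) (middleElements_mono hGF)
    have hcard : #G ≤ 2 := card_le_two_of_isChain_of_middleElements_eq_empty hG hmid
    omega
  · rw [hone]
    omega

theorem sum_card_prefixed_add_le (hF : ButterflyFree F) :
    ∑ X ∈ F, #(prefixed X) + 2 * ∑ X ∈ middleElements F, #(prefixed X) ≤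
      2 * n.factorial + ∑ X ∈ middleElements F, ∑ Y ∈ F, #(prefixed X ∩ prefixed Y) := by
  have hpointwise (f : Numbering (Fin n)) :
      #(prefixesIn F f) + 2 * #(prefixesIn (middleElements F) f) ≤
        2 + #(prefixesIn (middleElements F) f) * #(prefixesIn F f) := by
    have hchain := hF.card_add_two_mul_card_inter_middleElements_le (G := prefixesIn F f)
      (filter_subset _ _) (isChain_prefixesIn F f)
    rwa [prefixesIn_inter, inter_eq_right.2 (middleElements_subset F)] at hchain
  have hsum := sum_le_sum fun f (_ : f ∈ univ) ↦ hpointwise f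
  simp only [sum_add_distrib, ← mul_sum, sum_card_prefixesIn,
    sum_card_prefixesIn_mul_card_prefixesIn, sum_const, card_univ, Fintype.card_numbering,
    Fintype.card_fin, smul_eq_mul] at hsum
  rwa [mul_comm n.factorial] at hsum

theorem sum_dens_prefixed_add_le (hF : ButterflyFree F) :
    ∑ X ∈ F, (prefixed X).dens + 2 * ∑ X ∈ middleElements F, (prefixed X).dens ≤
      2 + ∑ X ∈ middleElements F, ∑ Y ∈ F, (prefixed X ∩ prefixed Y).dens := by
  have hpos : (0 : ℚ≥0) < n.factorial := by exact_mod_cast n.factorial_pos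
  simp only [dens, ← sum_div, Fintype.card_numbering, Fintype.card_fin]
  rw [← mul_div_assoc, ← add_div, add_div' _ _ _ hpos.ne', div_le_div_iff_of_pos_right hpos]
  exact_mod_cast hF.sum_card_prefixed_add_le

theorem sum_dens_prefixed_inter_prefixed (hF : ButterflyFree F) (hA : A ∈ F) (hX : X ∈ F)
    (hB : B ∈ F) (hAX : A ⊂ X) (hXB : X ⊂ B) :
    ∑ Y ∈ F, (prefixed X ∩ prefixed Y).dens =
      (prefixed X).dens + (prefixed A ∩ prefixed X).dens + (prefixed X ∩ prefixed B).dens := by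
  have hsub : {X, A, B} ⊆ F := by simp [insert_subset_iff, hA, hX, hB]
  have hzero (Y) (hY : Y ∈ F) (hYXAB : Y ∉ ({X, A, B} : Finset (Finset (Fin n)))) :
      (prefixed X ∩ prefixed Y).dens = 0 := by
    simp only [mem_insert, mem_singleton, not_or] at hYXAB
    rw [dens_eq_zero, ← disjoint_iff_inter_eq_empty]
    refine disjoint_prefixed_prefixed (fun hXY ↦ hYXAB.2.2 ?_) fun hYX ↦ hYXAB.2.1 ?_
    · exact hF.eq_of_ssuperset_of_ssuperset hA hX hY hB hAX
        (hXY.ssubset_of_ne (Ne.symm hYXAB.1)) hXB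
    · exact hF.eq_of_ssubset_of_ssubset hY hA hX hB (hYX.ssubset_of_ne hYXAB.1) hAX hXB
  rw [← sum_subset hsub hzero, sum_insert (by simp [hAX.ne', hXB.ne]),
    sum_pair (hAX.trans hXB).ne, inter_self, inter_comm (prefixed X) (prefixed A), add_assoc]

theorem sum_dens_prefixed_inter_prefixed_le (hF : ButterflyFree F) (hempty : ∅ ∉ F)
    (huniv : univ ∉ F) (hX : X ∈ middleElements F) :
    ∑ Y ∈ F, (prefixed X ∩ prefixed Y).dens ≤
      (prefixed X).dens + (prefixed X).dens / #X + (prefixed X).dens / #Xᶜ := by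
  obtain ⟨hXF, A, hA, B, hB, hAX, hXB⟩ := mem_middleElements.1 hX
  rw [hF.sum_dens_prefixed_inter_prefixed hA hXF hB hAX hXB]
  gcongr
  · exact dens_prefixed_inter_prefixed_le_of_nonempty
      (nonempty_iff_ne_empty.2 fun h ↦ hempty (h ▸ hA)) hAX
  · exact dens_prefixed_inter_prefixed_le_of_ne_univ hXB fun h ↦ huniv (h ▸ hB)

theorem sum_sdiff_inv_choose_add_sum_middleElements_le (hF : ButterflyFree F) (hempty : ∅ ∉ F)
    (huniv : univ ∉ F) :
    ∑ X ∈ F \ middleElements F, (n.choose #X : ℝ)⁻¹ +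
      ∑ X ∈ middleElements F, (2 - (#X : ℝ)⁻¹ - (n - #X : ℝ)⁻¹) * (n.choose #X : ℝ)⁻¹ ≤ 2 := by
  have hdens := hF.sum_dens_prefixed_add_le.trans <| add_le_add_right
    (sum_le_sum fun X ↦ hF.sum_dens_prefixed_inter_prefixed_le hempty huniv) 2
  have hreal : ∑ X ∈ F, (n.choose #X : ℝ)⁻¹ + 2 * ∑ X ∈ middleElements F, (n.choose #X : ℝ)⁻¹ ≤
      2 + ∑ X ∈ middleElements F, ((n.choose #X : ℝ)⁻¹ + (n.choose #X : ℝ)⁻¹ / #X +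
        (n.choose #X : ℝ)⁻¹ / (#Xᶜ : ℕ)) := by
    simp only [dens_prefixed, Fintype.card_fin] at hdens
    have hcast := NNRat.cast_le (K := ℝ).2 hdens
    push_cast at hcast
    exact hcast
  have hweight (X : Finset (Fin n)) :
      (2 - (#X : ℝ)⁻¹ - (n - #X : ℝ)⁻¹) * (n.choose #X : ℝ)⁻¹ =
        3 * (n.choose #X : ℝ)⁻¹ - ((n.choose #X : ℝ)⁻¹ + (n.choose #X : ℝ)⁻¹ / #X +
          (n.choose #X : ℝ)⁻¹ / (#Xᶜ : ℕ)) := by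
    rw [card_compl, Fintype.card_fin, Nat.cast_sub (card_finset_fin_le X)]
    ring
  rw [← sum_sdiff (middleElements_subset F)] at hreal
  simp only [hweight, sum_sub_distrib, ← mul_sum]
  linarith

end ButterflyFree

theorem one_add_div_mul_eq_two_sub_inv_sub_inv {K : Type*} [Field K] {x y : K} (hx : x ≠ 0)
    (hy : y ≠ 0) : 1 + ((x - 1) * (y - 1) - 1) / (x * y) = 2 - x⁻¹ - y⁻¹ := by
  field_simp
  ring

/-- Improved LYM-type inequality for butterfly-free families avoiding `∅` and `[n]`:
with `M` the set of middle elements of 3-chains in `F`,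
`∑_{F ∈ F∖M} 1/C(n,|F|) + ∑_{M ∈ M} (1 + ((|M|−1)(n−|M|−1)−1)/(|M|(n−|M|)))·1/C(n,|M|) ≤ 2`. -/
theorem improved_lym (n : ℕ) (hn : 2 ≤ n) (F : Finset (Finset (Fin n)))
    (hempty : ∅ ∉ F) (huniv : Finset.univ ∉ F) (hbf : ButterflyFree F)
    (M : Finset (Finset (Fin n)))
    (hM : M = F.filter (fun X => ∃ A ∈ F, ∃ B ∈ F, A ⊂ X ∧ X ⊂ B)) :
    ∑ A ∈ F \ M, (1 : ℝ) / (n.choose A.card : ℝ) +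
      ∑ X ∈ M, (1 + (((X.card : ℝ) - 1) * ((n : ℝ) - (X.card : ℝ) - 1) - 1) /
          ((X.card : ℝ) * ((n : ℝ) - (X.card : ℝ)))) * (1 / (n.choose X.card : ℝ)) ≤ 2 := by
  obtain rfl : M = middleElements F := hM
  simp only [one_div]
  refine le_of_eq_of_le ?_ (hbf.sum_sdiff_inv_choose_add_sum_middleElements_le hempty huniv)
  congr 1
  refine Finset.sum_congr rfl fun X hX ↦ ?_
  have hXF : X ∈ F := middleElements_subset F hX
  have hcard_ne_zero : (X.card : ℝ) ≠ 0 := by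
    simpa using ne_of_mem_of_not_mem hXF hempty
  have hcard_lt : X.card < n := by
    simpa using (Finset.card_lt_iff_ne_univ X).2 (ne_of_mem_of_not_mem hXF huniv)
  have hsub_ne_zero : (n - X.card : ℝ) ≠ 0 := sub_ne_zero.2 (by exact_mod_cast hcard_lt.ne')
  rw [one_add_div_mul_eq_two_sub_inv_sub_inv hcard_ne_zero hsub_ne_zero]
end

section
/- For all reals ε ∈ (0,1), δ ∈ (0,1) and γ ∈ (0,1) there exists n₀ such that the following holds for every n ≥ n₀: for every integer k with n/2 − √n ≤ k ≤ n/2 + √n, every integer m with 1 ≤ m ≤ 2^(n^(1−γ)), and every family F ⊆ {S ⊆ [n] : |S| = k} with |F| = C(n,k) − m, the number of sets G ⊆ [n] with |G| ≥ k+1 such that |{A ∈ F : A ⊊ G}| < (1−ε)k is at most δ·m. -/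
attribute [local instance] Classical.propDecidable

/-!
Let `M` be the family of missing `k`-sets and call `G` bad if it has more than `k` elements but
contains too few members of `F`. A bad set with `k + 1` elements covers many sets of `M`, and every
set with at least `k + 1` elements covered by a bad set is again bad. Hence, if `B` consists of the
first `j` bad sets in an order refining inclusion, each set of `B` covers at least `εk` sets of
`M ∪ B`. On the other hand, `N` vertices of the hypercube span at most `N log₂ N` edges, so
`j εk ≤ (m + j) log₂ (m + j)`. For `δm < j ≤ m` this is impossible, since `log m` is of smaller
order than `k`. Passing from all bad sets to `j ≤ m` of them is what keeps the logarithm small.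
-/

section

open Finset Filter Asymptotics

section LowerSubset

variable {β : Type*} [PartialOrder β]

theorem exists_lower_subset_card_eq (s : Finset β) {j : ℕ} (hj : j ≤ #s) :
    ∃ t ⊆ s, #t = j ∧ ∀ x ∈ t, ∀ y ∈ s, y ≤ x → y ∈ t := by
  induction hj using Nat.decreasingInduction with
  | self => exact ⟨s, subset_rfl, rfl, fun _ _ _ hy _ ↦ hy⟩
  | of_succ j _ ih =>
    obtain ⟨t, hts, htj, hlower⟩ := ih
    obtain ⟨z, hz⟩ := t.exists_maximal (card_pos.1 (by omega))
    refine ⟨t.erase z, (erase_subset z t).trans hts, ?_, fun x hx y hy hyx ↦ ?_⟩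
    · rw [card_erase_of_mem hz.prop, htj, Nat.add_sub_cancel]
    · obtain ⟨hxz, hxt⟩ := mem_erase.1 hx
      refine mem_erase.2 ⟨?_, hlower x hxt y hy hyx⟩
      rintro rfl
      exact hxz (hz.eq_of_ge hxt hyx)

end LowerSubset

section EdgeIsoperimetry

variable {α : Type*} [DecidableEq α]

/-- The number of members of `𝒜` covered by `S`. Summed over `S ∈ 𝒜` it counts the edges of the
hypercube with both ends in `𝒜`, each at its upper end. -/
def downDegree (𝒜 : Finset (Finset α)) (S : Finset α) : ℕ :=
  #{a ∈ S | S.erase a ∈ 𝒜}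

theorem downDegree_mono {𝒜 ℬ : Finset (Finset α)} (h : 𝒜 ⊆ ℬ) (S : Finset α) :
    downDegree 𝒜 S ≤ downDegree ℬ S :=
  card_le_card (monotone_filter_right S fun _ _ ha ↦ h ha)

theorem downDegree_le_card_ssubsets (F : Finset (Finset α)) (G : Finset α) :
    downDegree F G ≤ #{A ∈ F | A ⊂ G} := by
  refine card_le_card_of_injOn G.erase (fun a ha ↦ ?_)
    ((erase_injOn G).mono (filter_subset _ G))
  obtain ⟨haG, haF⟩ := mem_filter.1 ha
  exact mem_filter.2 ⟨haF, erase_ssubset haG⟩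

theorem downDegree_nonMemberSubfamily {a : α} {S : Finset α} (ha : a ∉ S)
    (𝒜 : Finset (Finset α)) : downDegree (𝒜.nonMemberSubfamily a) S = downDegree 𝒜 S := by
  simp [downDegree, mem_nonMemberSubfamily, ha]

theorem downDegree_insert {a : α} {T : Finset α} (ha : a ∉ T) (𝒜 : Finset (Finset α)) :
    downDegree 𝒜 (insert a T) =
      downDegree (𝒜.memberSubfamily a) T + if T ∈ 𝒜 then 1 else 0 := by
  have erase_iff : ∀ b ∈ T, ((insert a T).erase b ∈ 𝒜 ↔ T.erase b ∈ 𝒜.memberSubfamily a) := by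
    intro b hb
    rw [erase_insert_of_ne (by grind), mem_memberSubfamily]
    simp [ha]
  rw [downDegree, downDegree, filter_insert, erase_insert ha, filter_congr erase_iff]
  split_ifs <;> simp [ha]

theorem sum_nonMemberSubfamily_add_sum_memberSubfamily {M : Type*} [AddCommMonoid M] (a : α)
    (𝒜 : Finset (Finset α)) (f : Finset α → M) :
    ∑ S ∈ 𝒜.nonMemberSubfamily a, f S + ∑ T ∈ 𝒜.memberSubfamily a, f (insert a T) =
      ∑ S ∈ 𝒜, f S := by
  have insert_injOn : Set.InjOn (insert a) (𝒜.memberSubfamily a : Set (Finset α)) :=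
    (insert_erase_invOn (a := a)).2.injOn.mono fun T hT ↦ (mem_memberSubfamily.1 hT).2
  rw [← sum_image insert_injOn, image_insert_memberSubfamily, add_comm]
  exact sum_filter_add_sum_filter_not 𝒜 (a ∈ ·) f

theorem sum_downDegree_eq (a : α) (𝒜 : Finset (Finset α)) :
    ∑ S ∈ 𝒜, downDegree 𝒜 S =
      ∑ S ∈ 𝒜.nonMemberSubfamily a, downDegree (𝒜.nonMemberSubfamily a) S +
        ∑ T ∈ 𝒜.memberSubfamily a, downDegree (𝒜.memberSubfamily a) T +
        #{T ∈ 𝒜.memberSubfamily a | T ∈ 𝒜} := by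
  rw [← sum_nonMemberSubfamily_add_sum_memberSubfamily a, add_assoc, card_filter,
    ← sum_add_distrib]
  congr 1
  · exact sum_congr rfl fun S hS ↦
      (downDegree_nonMemberSubfamily (mem_nonMemberSubfamily.1 hS).2 𝒜).symm
  · exact sum_congr rfl fun T hT ↦ downDegree_insert (mem_memberSubfamily.1 hT).2 𝒜

theorem card_filter_memberSubfamily_le_min (a : α) (𝒜 : Finset (Finset α)) :
    #{T ∈ 𝒜.memberSubfamily a | T ∈ 𝒜} ≤
      min #(𝒜.nonMemberSubfamily a) #(𝒜.memberSubfamily a) := by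
  refine le_min (card_le_card fun T hT ↦ ?_) (card_filter_le _ _)
  obtain ⟨hT₁, hT⟩ := mem_filter.1 hT
  exact mem_nonMemberSubfamily.2 ⟨hT, (mem_memberSubfamily.1 hT₁).2⟩

theorem mul_log_add_mul_log_add_min_le (a b : ℕ) :
    a * Nat.log 2 a + b * Nat.log 2 b + min a b ≤ (a + b) * Nat.log 2 (a + b) := by
  wlog hab : a ≤ b generalizing a b
  · have := this b a (le_of_not_ge hab)
    rwa [add_comm b a, min_comm, add_comm (b * _)] at this
  obtain rfl | ha := Nat.eq_zero_or_pos a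
  · simp
  have log_a : Nat.log 2 a + 1 ≤ Nat.log 2 (a + b) := by
    rw [← Nat.log_mul_base one_lt_two ha.ne']
    exact Nat.log_mono_right (by omega)
  have log_b : Nat.log 2 b ≤ Nat.log 2 (a + b) := Nat.log_mono_right (by omega)
  calc a * Nat.log 2 a + b * Nat.log 2 b + min a b
      = a * (Nat.log 2 a + 1) + b * Nat.log 2 b := by rw [min_eq_left hab]; ring
    _ ≤ a * Nat.log 2 (a + b) + b * Nat.log 2 (a + b) := by gcongr
    _ = (a + b) * Nat.log 2 (a + b) := by ring

theorem sum_downDegree_le_card_mul_log (𝒜 : Finset (Finset α)) :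
    ∑ S ∈ 𝒜, downDegree 𝒜 S ≤ #𝒜 * Nat.log 2 #𝒜 := by
  induction 𝒜 using memberFamily_induction_on with
  | empty => simp
  | singleton_empty => simp [downDegree]
  | @subfamily a 𝒜 ih₀ ih₁ =>
    rw [sum_downDegree_eq a, ← card_memberSubfamily_add_card_nonMemberSubfamily a 𝒜,
      add_comm #(𝒜.memberSubfamily a)]
    exact (add_le_add (add_le_add ih₀ ih₁) (card_filter_memberSubfamily_le_min a 𝒜)).trans
      (mul_log_add_mul_log_add_min_le _ _)

end EdgeIsoperimetry

section PoorSupersets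

variable {α : Type*} [Fintype α] [DecidableEq α] {F : Finset (Finset α)} {k : ℕ} {t : ℝ}

/-- The sets with more than `k` elements that properly contain fewer than `t` members of `F`:
the bad sets when `F` consists of `k`-sets and `t = (1 - ε) * k`. -/
noncomputable def poorSupersets (F : Finset (Finset α)) (k : ℕ) (t : ℝ) : Finset (Finset α) :=
  {G | k + 1 ≤ #G ∧ (#{A ∈ F | A ⊂ G} : ℝ) < t}

theorem mem_poorSupersets {G : Finset α} :
    G ∈ poorSupersets F k t ↔ k + 1 ≤ #G ∧ (#{A ∈ F | A ⊂ G} : ℝ) < t := by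
  simp [poorSupersets]

theorem mem_poorSupersets_of_subset {G H : Finset α} (hG : G ∈ poorSupersets F k t)
    (hHG : H ⊆ G) (hH : k + 1 ≤ #H) : H ∈ poorSupersets F k t := by
  have card_le : #{A ∈ F | A ⊂ H} ≤ #{A ∈ F | A ⊂ G} :=
    card_le_card (monotone_filter_right F fun _ _ hA ↦ hA.trans_subset hHG)
  exact mem_poorSupersets.2
    ⟨hH, (Nat.cast_le.2 card_le).trans_lt (mem_poorSupersets.1 hG).2⟩

theorem downDegree_add_downDegree_powersetCard_sdiff {G : Finset α} (hG : #G = k + 1) :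
    downDegree F G + downDegree (powersetCard k univ \ F) G = k + 1 := by
  have erase_iff : ∀ a ∈ G, (G.erase a ∈ powersetCard k univ \ F ↔ G.erase a ∉ F) := by
    intro a ha
    simp [card_erase_of_mem ha, hG]
  rw [downDegree, downDegree, filter_congr erase_iff, card_filter_add_card_filter_not, hG]

theorem le_downDegree_union_of_lower {B : Finset (Finset α)} (hB : B ⊆ poorSupersets F k t)
    (hlower : ∀ G ∈ B, ∀ H ∈ poorSupersets F k t, H ⊆ G → H ∈ B) {G : Finset α} (hG : G ∈ B) :
    k + 1 - t ≤ downDegree (powersetCard k univ \ F ∪ B) G := by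
  obtain ⟨hkG, hGt⟩ := mem_poorSupersets.1 (hB hG)
  obtain hkG | hkG := hkG.eq_or_lt
  · have few_in_F : (downDegree F G : ℝ) ≤ #{A ∈ F | A ⊂ G} :=
      Nat.cast_le.2 (downDegree_le_card_ssubsets F G)
    have total : (downDegree F G + downDegree (powersetCard k univ \ F) G : ℝ) = k + 1 :=
      mod_cast downDegree_add_downDegree_powersetCard_sdiff hkG.symm
    have mono : (downDegree (powersetCard k univ \ F) G : ℝ) ≤
        downDegree (powersetCard k univ \ F ∪ B) G :=
      Nat.cast_le.2 (downDegree_mono subset_union_left G)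
    linarith
  · have erase_mem : ∀ a ∈ G, G.erase a ∈ powersetCard k univ \ F ∪ B := fun a ha ↦
      mem_union_right _ <| hlower G hG _
        (mem_poorSupersets_of_subset (hB hG) (erase_subset a G)
          (by rw [card_erase_of_mem ha]; omega)) (erase_subset a G)
    rw [downDegree, filter_true_of_mem erase_mem]
    have t_pos : 0 < t := (Nat.cast_nonneg _).trans_lt hGt
    have lt_card : (k + 1 : ℝ) < #G := mod_cast hkG
    linarith only [t_pos, lt_card]

theorem mul_le_mul_log_of_le_card_poorSupersets {j : ℕ} (hj : j ≤ #(poorSupersets F k t)) :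
    j * (k + 1 - t) ≤
      ((#(powersetCard k univ \ F) + j) * Nat.log 2 (#(powersetCard k univ \ F) + j) : ℕ) := by
  obtain ⟨B, hB, rfl, hlower⟩ := exists_lower_subset_card_eq (poorSupersets F k t) hj
  set U := powersetCard k univ \ F ∪ B
  have card_U : #U ≤ #(powersetCard k univ \ F) + #B := card_union_le _ _
  calc #B * (k + 1 - t)
      ≤ ∑ G ∈ B, (downDegree U G : ℝ) := by
        rw [← nsmul_eq_mul]
        exact card_nsmul_le_sum _ _ _ fun G hG ↦ le_downDegree_union_of_lower hB hlower hG
    _ ≤ (∑ G ∈ U, downDegree U G : ℕ) := by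
        exact_mod_cast sum_le_sum_of_subset subset_union_right
    _ ≤ (#U * Nat.log 2 #U : ℕ) := Nat.cast_le.2 (sum_downDegree_le_card_mul_log U)
    _ ≤ _ := by gcongr

theorem card_poorSupersets_le {m : ℕ} (hm : 1 ≤ m) (hFm : #(powersetCard k univ \ F) = m)
    {δ : ℝ} (hδ₀ : 0 < δ) (hδ₁ : δ < 1) (hlog : 2 * (Nat.log 2 (2 * m) : ℝ) ≤ δ * (k + 1 - t)) :
    (#(poorSupersets F k t) : ℝ) ≤ δ * m := by
  by_contra! hmany
  have m_pos : (0 : ℝ) < m := mod_cast hm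
  have log_pos : 0 < Nat.log 2 (2 * m) := Nat.log_pos one_lt_two (by omega)
  have degree_pos : 0 < k + 1 - t := by
    refine pos_of_mul_pos_right (lt_of_lt_of_le ?_ hlog) hδ₀.le
    positivity
  set j := ⌊δ * m⌋₊ + 1
  have lt_j : δ * m < j := by simpa [j] using Nat.lt_floor_add_one (δ * m)
  have j_le_m : j ≤ m := (Nat.floor_lt (by positivity)).2 (mul_lt_of_lt_one_left m_pos hδ₁)
  have j_le_card : j ≤ #(poorSupersets F k t) := (Nat.floor_lt (by positivity)).2 hmany
  have : j * (k + 1 - t) < j * (k + 1 - t) :=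
    calc j * (k + 1 - t)
        ≤ ((m + j) * Nat.log 2 (m + j) : ℕ) := by
          simpa only [hFm] using mul_le_mul_log_of_le_card_poorSupersets j_le_card
      _ ≤ ((2 * m) * Nat.log 2 (2 * m) : ℕ) := by
          have : m + j ≤ 2 * m := by omega
          gcongr
      _ = m * (2 * (Nat.log 2 (2 * m) : ℝ)) := by push_cast; ring
      _ ≤ m * (δ * (k + 1 - t)) := by gcongr
      _ = δ * m * (k + 1 - t) := by ring
      _ < j * (k + 1 - t) := by gcongr
  exact this.false

end PoorSupersets

theorem card_powersetCard_sdiff_of_subset_levelFam {n k m : ℕ} {F : Finset (Finset (Fin n))}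
    (hF : F ⊆ levelFam n k) (hFm : #F + m = n.choose k) : #(powersetCard k univ \ F) = m := by
  have levelFam_eq : levelFam n k = powersetCard k univ := by ext; simp [levelFam]
  rw [card_sdiff_of_subset (levelFam_eq ▸ hF), card_powersetCard, card_univ, Fintype.card_fin]
  omega

theorem natLog_two_mul_le_of_le_two_rpow {m : ℕ} (hm : 1 ≤ m) {x : ℝ} (hx : (m : ℝ) ≤ 2 ^ x) :
    (Nat.log 2 (2 * m) : ℝ) ≤ x + 1 := by
  have two_mul_m_pos : (0 : ℝ) < (2 * m : ℕ) := by positivity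
  refine (Real.natLog_le_logb (2 * m) 2).trans ?_
  rw [Nat.cast_ofNat, Real.logb_le_iff_le_rpow one_lt_two two_mul_m_pos,
    Real.rpow_add_one two_ne_zero]
  push_cast
  linarith

theorem isLittleO_natCast_rpow_one_sub {γ : ℝ} (hγ : 0 < γ) :
    (fun n : ℕ ↦ (n : ℝ) ^ (1 - γ)) =o[atTop] fun n : ℕ ↦ (n : ℝ) := by
  have tendsto_ratio : Tendsto (fun n : ℕ ↦ (n : ℝ) ^ (-γ)) atTop (nhds 0) :=
    (tendsto_rpow_neg_atTop hγ).comp tendsto_natCast_atTop_atTop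
  refine isLittleO_iff_exists_eq_mul.2 ⟨_, tendsto_ratio, ?_⟩
  filter_upwards [eventually_gt_atTop 0] with n hn
  rw [Pi.mul_apply, ← Real.rpow_add_one (by positivity), neg_add_eq_sub]

theorem one_fourth_mul_le_half_sub_sqrt {x : ℝ} (hx : 16 ≤ x) : 1 / 4 * x ≤ x / 2 - √x := by
  have : √x ≤ x / 4 := Real.sqrt_le_iff.2 ⟨by positivity, by nlinarith⟩
  linarith

theorem few_bad_supersets_general {ε δ c : ℝ} (hε : 0 < ε) (hδ₀ : 0 < δ) (hδ₁ : δ < 1)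
    (hc : 0 < c) {g : ℕ → ℝ} (hg : g =o[atTop] fun n ↦ (n : ℝ)) :
    ∀ᶠ n : ℕ in atTop, ∀ k : ℕ, c * n ≤ k → ∀ m : ℕ, 1 ≤ m → (m : ℝ) ≤ 2 ^ g n →
      ∀ F : Finset (Finset (Fin n)), F ⊆ levelFam n k → #F + m = n.choose k →
      (#(poorSupersets F k ((1 - ε) * k)) : ℝ) ≤ δ * m := by
  have add_one_isLittleO : (fun n ↦ g n + 1) =o[atTop] fun n ↦ (n : ℝ) :=
    hg.add ((isLittleO_const_id_atTop (1 : ℝ)).comp_tendsto tendsto_natCast_atTop_atTop)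
  have C_pos : 0 < δ * ε * c / 2 := by positivity
  filter_upwards [add_one_isLittleO.bound C_pos] with n hn
  intro k hk m hm hmg F hF hFm
  refine card_poorSupersets_le hm (card_powersetCard_sdiff_of_subset_levelFam hF hFm) hδ₀ hδ₁ ?_
  calc 2 * (Nat.log 2 (2 * m) : ℝ)
      ≤ 2 * (g n + 1) := by gcongr; exact natLog_two_mul_le_of_le_two_rpow hm hmg
    _ ≤ 2 * (δ * ε * c / 2 * n) := by
        gcongr
        simpa using (le_abs_self _).trans hn
    _ = δ * (ε * (c * n)) := by ring
    _ ≤ δ * (ε * k) := by gcongr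
    _ ≤ δ * (k + 1 - (1 - ε) * k) := by gcongr; linarith

end

/-- If `F` consists of all but `m` of the `k`-subsets of `[n]` (with `k` close to `n/2` and
`m ≤ 2^(n^(1−γ))`), then the number of sets `G` of size `≥ k+1` containing fewer than
`(1−ε)k` members of `F` is at most `δ·m`. -/
theorem few_bad_supersets (ε δ γ : ℝ) (hε : 0 < ε ∧ ε < 1) (hδ : 0 < δ ∧ δ < 1)
    (hγ : 0 < γ ∧ γ < 1) :
    ∃ n₀ : ℕ, ∀ n : ℕ, n₀ ≤ n → ∀ k : ℕ,
      (n : ℝ) / 2 - Real.sqrt n ≤ (k : ℝ) → (k : ℝ) ≤ (n : ℝ) / 2 + Real.sqrt n →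
      ∀ m : ℕ, 1 ≤ m → (m : ℝ) ≤ (2 : ℝ) ^ ((n : ℝ) ^ (1 - γ)) →
      ∀ F : Finset (Finset (Fin n)), F ⊆ levelFam n k → F.card + m = n.choose k →
      (((Finset.univ.filter (fun G : Finset (Fin n) =>
          k + 1 ≤ G.card ∧ ((F.filter (fun A => A ⊂ G)).card : ℝ) < (1 - ε) * k)).card : ℝ)
        ≤ δ * m) := by
  refine Filter.eventually_atTop.1 ?_
  filter_upwards [few_bad_supersets_general hε.1 hδ.1 hδ.2 (by norm_num : (0 : ℝ) < 1 / 4)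
    (isLittleO_natCast_rpow_one_sub hγ.1), Filter.eventually_ge_atTop 16]
    with n hn h16
  intro k hk _ m hm hmγ F hF hFm
  exact hn k ((one_fourth_mul_le_half_sub_sqrt (mod_cast h16)).trans hk) m hm hmγ F hF hFm
end

section
/- Let n ≥ 1 and 1 ≤ k ≤ n−1 be integers and δ ∈ (0,1] a real. If F ⊆ {S ⊆ [n] : |S| = k} has |F| = m and m < C(⌊δn⌋, ⌊δn/2⌋), then the number of unordered pairs {A,B} of distinct members of F with |A ∩ B| = k−1 is at most δ·m·n². -/
attribute [local instance] Classical.propDecidable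

/-!
Pick a coordinate `x` on which two members of `F` differ and split `F` into the sets containing `x`
and those avoiding `x`. A set and an element `x` leave at most `n` choices for an adjacent set on
the other side of the split, since the two sets differ exactly in `x` and one further element.
So at most `n * min a b` edges run between parts of sizes `a` and `b`. As
`a log₂ a + b log₂ b + min a b ≤ (a + b) log₂ (a + b)`, induction on `|F|` bounds the number of
edges by `n m log₂ m`, and `m < C(⌊δn⌋, ⌊δn/2⌋) ≤ 2 ^ (δn)` gives `log₂ m ≤ δn`.
-/

open Finset
open scoped symmDiff

theorem mul_logb_two_add_mul_logb_two_add_min_le {a b : ℝ} (ha : 0 < a) (hb : 0 < b) :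
    a * Real.logb 2 a + b * Real.logb 2 b + min a b ≤ (a + b) * Real.logb 2 (a + b) := by
  wlog hab : a ≤ b generalizing a b
  · have := this hb ha (le_of_not_ge hab)
    rwa [add_comm b a, min_comm, add_comm (b * _)] at this
  have logb_a : Real.logb 2 a + 1 ≤ Real.logb 2 (a + b) := by
    rw [← Real.logb_self_eq_one one_lt_two, ← Real.logb_mul ha.ne' two_ne_zero]
    exact Real.logb_le_logb_of_le one_lt_two (by positivity) (by linarith)
  have logb_b : Real.logb 2 b ≤ Real.logb 2 (a + b) :=
    Real.logb_le_logb_of_le one_lt_two hb (by linarith)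
  calc a * Real.logb 2 a + b * Real.logb 2 b + min a b
      = a * (Real.logb 2 a + 1) + b * Real.logb 2 b := by rw [min_eq_left hab]; ring
    _ ≤ a * Real.logb 2 (a + b) + b * Real.logb 2 (a + b) := by gcongr
    _ = (a + b) * Real.logb 2 (a + b) := by ring

theorem choose_floor_le_two_rpow {x : ℝ} (hx : 0 ≤ x) (j : ℕ) :
    (Nat.choose ⌊x⌋₊ j : ℝ) ≤ 2 ^ x :=
  calc (Nat.choose ⌊x⌋₊ j : ℝ) ≤ (2 : ℝ) ^ ⌊x⌋₊ := mod_cast Nat.choose_le_two_pow _ _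
    _ = (2 : ℝ) ^ (⌊x⌋₊ : ℝ) := (Real.rpow_natCast _ _).symm
    _ ≤ 2 ^ x := Real.rpow_le_rpow_of_exponent_le one_le_two (Nat.floor_le hx)

section Graph

variable {V ι : Type*} (G : SimpleGraph V)

/-- The edges of `G` with both endpoints in `F`, as unordered pairs. -/
noncomputable def spannedEdges (F : Finset V) : Finset (Sym2 V) :=
  {e ∈ F.sym2 | e ∈ G.edgeSet}

variable {G}

theorem mk_mem_spannedEdges {F : Finset V} {v w : V} :
    s(v, w) ∈ spannedEdges G F ↔ (v ∈ F ∧ w ∈ F) ∧ G.Adj v w := by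
  simp [spannedEdges]

theorem spannedEdges_eq_empty_of_card_le_one {F : Finset V} (hF : #F ≤ 1) :
    spannedEdges G F = ∅ := by
  refine eq_empty_of_forall_notMem fun e ↦ e.ind fun v w hvw ↦ ?_
  obtain ⟨⟨hv, hw⟩, adj⟩ := mk_mem_spannedEdges.1 hvw
  exact adj.ne (card_le_one.1 hF v hv w hw)

theorem card_spannedEdges_le_add_card_interedges (F : Finset V) (q : V → Prop) :
    #(spannedEdges G F) ≤ #(spannedEdges G {v ∈ F | q v}) + #(spannedEdges G {v ∈ F | ¬ q v}) +
      #(G.interedges {v ∈ F | q v} {v ∈ F | ¬ q v}) := by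
  have cover : spannedEdges G F ⊆ (spannedEdges G {v ∈ F | q v} ∪ spannedEdges G {v ∈ F | ¬ q v}) ∪
      (G.interedges {v ∈ F | q v} {v ∈ F | ¬ q v}).image fun p ↦ s(p.1, p.2) := by
    refine fun e ↦ e.ind fun v w hvw ↦ ?_
    obtain ⟨⟨hv, hw⟩, adj⟩ := mk_mem_spannedEdges.1 hvw
    simp only [mem_union, mem_image, Prod.exists, mk_mem_spannedEdges, mem_filter,
      SimpleGraph.mk_mem_interedges_iff]
    by_cases qv : q v <;> by_cases qw : q w
    · exact .inl (.inl ⟨⟨⟨hv, qv⟩, hw, qw⟩, adj⟩)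
    · exact .inr ⟨v, w, ⟨⟨hv, qv⟩, ⟨hw, qw⟩, adj⟩, rfl⟩
    · exact .inr ⟨w, v, ⟨⟨hw, qw⟩, ⟨hv, qv⟩, adj.symm⟩, Sym2.eq_swap⟩
    · exact .inl (.inr ⟨⟨⟨hv, qv⟩, hw, qw⟩, adj⟩)
  exact (card_le_card cover).trans <| (card_union_le _ _).trans <|
    add_le_add (card_union_le _ _) card_image_le

theorem card_interedges_le_mul_card_left {s t : Finset V} {d : ℕ}
    (hd : ∀ v ∈ s, #{w ∈ t | G.Adj v w} ≤ d) : #(G.interedges s t) ≤ d * #s := by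
  have fst_mem : ∀ e ∈ G.interedges s t, e.1 ∈ s := fun e he ↦ (G.mem_interedges_iff.1 he).1
  refine card_le_mul_card_image_of_maps_to fst_mem d fun v hv ↦ le_trans ?_ (hd v hv)
  refine card_le_card_of_injOn Prod.snd (fun e he ↦ ?_) fun e he e' he' h ↦ ?_
  · obtain ⟨mem_edges, rfl⟩ := mem_filter.1 he
    exact mem_filter.2 (G.mem_interedges_iff.1 mem_edges).2
  · exact Prod.ext ((mem_filter.1 he).2.trans (mem_filter.1 he').2.symm) h

theorem card_interedges_le_mul_min {s t : Finset V} {d : ℕ}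
    (hs : ∀ v ∈ s, #{w ∈ t | G.Adj v w} ≤ d) (ht : ∀ w ∈ t, #{v ∈ s | G.Adj w v} ≤ d) :
    #(G.interedges s t) ≤ d * min #s #t := by
  have : Std.Symm G.Adj := G.symm
  have right : #(G.interedges s t) ≤ d * #t :=
    (Rel.card_interedges_comm s t).trans_le (card_interedges_le_mul_card_left ht)
  rw [← Nat.mul_min_mul_left]
  exact le_min (card_interedges_le_mul_card_left hs) right

theorem card_interedges_filter_le_mul_min {q : V → Prop} {d : ℕ}
    (hd : ∀ v, {w | G.Adj v w ∧ (q v ↔ ¬ q w)}.encard ≤ d) (F : Finset V) :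
    #(G.interedges {v ∈ F | q v} {v ∈ F | ¬ q v}) ≤
      d * min #{v ∈ F | q v} #{v ∈ F | ¬ q v} := by
  have card_across_le (v : V) (t : Finset V) (ht : ∀ w ∈ t, q v ↔ ¬ q w) :
      #{w ∈ t | G.Adj v w} ≤ d := by
    rw [← ENat.natCast_le_natCast, ← Set.encard_coe_eq_coe_finsetCard]
    refine (Set.encard_le_encard fun w hw ↦ ?_).trans (hd v)
    exact ⟨(mem_filter.1 hw).2, ht w (mem_filter.1 hw).1⟩
  refine card_interedges_le_mul_min (fun v hv ↦ card_across_le v _ fun w hw ↦ ?_)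
    fun w hw ↦ card_across_le w _ fun v hv ↦ ?_
  · exact iff_of_true (mem_filter.1 hv).2 (mem_filter.1 hw).2
  · exact iff_of_false (mem_filter.1 hw).2 (not_not.2 (mem_filter.1 hv).2)

theorem exists_index_separating {p : V → ι → Prop} (hp : Function.Injective p) {F : Finset V}
    (hF : 1 < #F) : ∃ i, (∃ v ∈ F, p v i) ∧ ∃ w ∈ F, ¬ p w i := by
  obtain ⟨v, hv, w, hw, hvw⟩ := one_lt_card.1 hF
  obtain ⟨i, hi⟩ : ∃ i, p v i ≠ p w i := Function.ne_iff.1 (hp.ne hvw)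
  by_cases hvi : p v i
  · exact ⟨i, ⟨v, hv, hvi⟩, w, hw, fun hwi ↦ hi (propext (iff_of_true hvi hwi))⟩
  · exact ⟨i, ⟨w, hw, by_contra fun hwi ↦ hi (propext (iff_of_false hvi hwi))⟩, v, hv, hvi⟩

theorem card_spannedEdges_le_mul_mul_logb {p : V → ι → Prop} (hp : Function.Injective p) {d : ℕ}
    (hd : ∀ i v, {w | G.Adj v w ∧ (p v i ↔ ¬ p w i)}.encard ≤ d) (F : Finset V) :
    (#(spannedEdges G F) : ℝ) ≤ d * (#F * Real.logb 2 #F) := by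
  induction F using Finset.strongInduction with
  | H F ih =>
  rcases le_or_gt #F 1 with hF | hF
  · rw [spannedEdges_eq_empty_of_card_le_one hF]
    interval_cases #F <;> simp
  obtain ⟨i, ⟨v, hv, hvi⟩, w, hw, hwi⟩ := exists_index_separating hp hF
  set F₁ := {u ∈ F | p u i}
  set F₀ := {u ∈ F | ¬ p u i}
  have card_F₁_pos : (0 : ℝ) < #F₁ := mod_cast card_pos.2 ⟨v, mem_filter.2 ⟨hv, hvi⟩⟩
  have card_F₀_pos : (0 : ℝ) < #F₀ := mod_cast card_pos.2 ⟨w, mem_filter.2 ⟨hw, hwi⟩⟩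
  have card_F : (#F : ℝ) = #F₁ + #F₀ := mod_cast (card_filter_add_card_filter_not _).symm
  have edges_F₁ := ih F₁ (filter_ssubset.2 ⟨w, hw, hwi⟩)
  have edges_F₀ := ih F₀ (filter_ssubset.2 ⟨v, hv, not_not.2 hvi⟩)
  have edges_across : (#(G.interedges F₁ F₀) : ℝ) ≤ d * min (#F₁ : ℝ) #F₀ :=
    mod_cast card_interedges_filter_le_mul_min (hd i) F
  calc (#(spannedEdges G F) : ℝ)
      ≤ #(spannedEdges G F₁) + #(spannedEdges G F₀) + #(G.interedges F₁ F₀) :=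
        mod_cast card_spannedEdges_le_add_card_interedges F (p · i)
    _ ≤ d * (#F₁ * Real.logb 2 #F₁) + d * (#F₀ * Real.logb 2 #F₀) + d * min (#F₁ : ℝ) #F₀ := by
        gcongr
    _ = d * (#F₁ * Real.logb 2 #F₁ + #F₀ * Real.logb 2 #F₀ + min (#F₁ : ℝ) #F₀) := by ring
    _ ≤ d * ((#F₁ + #F₀) * Real.logb 2 (#F₁ + #F₀)) := by
        gcongr
        exact mul_logb_two_add_mul_logb_two_add_min_le card_F₁_pos card_F₀_pos
    _ = d * (#F * Real.logb 2 #F) := by rw [card_F]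

end Graph

section DistanceTwo

variable (α : Type*) [DecidableEq α]

/-- The graph on all finite subsets of `α` in which two sets are adjacent when they differ in
exactly two elements. On the `k`-subsets of `[n]` it is the Hamming graph `H(n,k)`. -/
def distanceTwoGraph : SimpleGraph (Finset α) where
  Adj A B := #(A ∆ B) = 2
  symm := ⟨fun A B h ↦ by rwa [symmDiff_comm]⟩
  loopless := ⟨fun A h ↦ by simp at h⟩

variable {α}

theorem distanceTwoGraph_adj {A B : Finset α} : (distanceTwoGraph α).Adj A B ↔ #(A ∆ B) = 2 :=
  Iff.rfl

theorem encard_distanceTwoGraph_adj_across_le [Fintype α] (x : α) (A : Finset α) :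
    {B | (distanceTwoGraph α).Adj A B ∧ (x ∈ A ↔ x ∉ B)}.encard ≤ Fintype.card α := by
  have subset_range : {B | (distanceTwoGraph α).Adj A B ∧ (x ∈ A ↔ x ∉ B)} ⊆
      Set.range fun y ↦ A ∆ {x, y} := by
    rintro B ⟨adj, hx⟩
    have x_mem : x ∈ A ∆ B := by rw [mem_symmDiff]; tauto
    obtain ⟨y, hy⟩ : ∃ y, (A ∆ B).erase x = {y} :=
      card_eq_one.1 (by rw [card_erase_of_mem x_mem, distanceTwoGraph_adj.1 adj])
    have symmDiff_eq : A ∆ B = {x, y} := by rw [← hy, insert_erase x_mem]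
    exact ⟨y, (congrArg (A ∆ ·) symmDiff_eq).symm.trans (symmDiff_symmDiff_cancel_left A B)⟩
  calc _ ≤ (Set.range fun y ↦ A ∆ {x, y}).encard := Set.encard_le_encard subset_range
    _ ≤ (Set.univ : Set α).encard := Set.image_univ ▸ Set.encard_image_le _ _
    _ = Fintype.card α := by simp

theorem distanceTwoGraph_adj_of_card_inter {k : ℕ} {A B : Finset α} (hA : #A = k) (hB : #B = k)
    (hAB : A ≠ B) (hinter : #(A ∩ B) = k - 1) : (distanceTwoGraph α).Adj A B := by
  have hk : k ≠ 0 := by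
    rintro rfl
    exact hAB ((card_eq_zero.1 hA).trans (card_eq_zero.1 hB).symm)
  have cardA := card_sdiff_add_card_inter A B
  have cardB := card_sdiff_add_card_inter B A
  rw [inter_comm] at cardB
  rw [distanceTwoGraph_adj, Finset.symmDiff_def, card_union_of_disjoint disjoint_sdiff_sdiff]
  omega

theorem card_pairs_card_inter_le_card_spannedEdges {k : ℕ} {F : Finset (Finset α)}
    (hF : ∀ A ∈ F, #A = k) :
    #{P ∈ F.powersetCard 2 | ∃ A ∈ P, ∃ B ∈ P, A ≠ B ∧ #(A ∩ B) = k - 1} ≤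
      #(spannedEdges (distanceTwoGraph α) F) := by
  refine (card_le_card fun P hP ↦ ?_).trans (card_image_le (f := Sym2.toFinset))
  obtain ⟨hP, A, hA, B, hB, hAB, hinter⟩ := mem_filter.1 hP
  obtain ⟨hPF, hP⟩ := mem_powersetCard.1 hP
  have P_eq : {A, B} = P :=
    eq_of_subset_of_card_le (by simp [insert_subset_iff, hA, hB]) (by rw [hP, card_pair hAB])
  have adj := distanceTwoGraph_adj_of_card_inter (hF A (hPF hA)) (hF B (hPF hB)) hAB hinter
  exact mem_image.2 ⟨s(A, B), mk_mem_spannedEdges.2 ⟨⟨hPF hA, hPF hB⟩, adj⟩,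
    Sym2.toFinset_mk_eq.trans P_eq⟩

theorem hamming_edges_bound_general [Fintype α] (δ : ℝ) (F : Finset (Finset α))
    (hF : (#F : ℝ) ≤ 2 ^ (δ * Fintype.card α)) :
    (#(spannedEdges (distanceTwoGraph α) F) : ℝ) ≤ δ * #F * (Fintype.card α : ℝ) ^ 2 := by
  have edges_le := card_spannedEdges_le_mul_mul_logb (p := fun (A : Finset α) x ↦ x ∈ A)
    (fun A B h ↦ Finset.ext fun x ↦ iff_of_eq (congrFun h x))
    encard_distanceTwoGraph_adj_across_le F
  rcases F.eq_empty_or_nonempty with rfl | hne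
  · simpa using edges_le
  have logb_le : Real.logb 2 #F ≤ δ * Fintype.card α :=
    (Real.logb_le_iff_le_rpow one_lt_two (by exact_mod_cast hne.card_pos)).2 hF
  calc (#(spannedEdges (distanceTwoGraph α) F) : ℝ)
      ≤ Fintype.card α * (#F * Real.logb 2 #F) := edges_le
    _ ≤ Fintype.card α * (#F * (δ * Fintype.card α)) := by gcongr
    _ = δ * #F * (Fintype.card α : ℝ) ^ 2 := by ring

end DistanceTwo

/-- Isoperimetric bound in the Hamming graph `H(n,k)`: a family `F` of `m < C(⌊δn⌋,⌊δn/2⌋)`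
`k`-subsets of `[n]` spans at most `δ·m·n²` pairs intersecting in `k−1` elements. -/
theorem hamming_edges_bound (n k : ℕ) (hn : 1 ≤ n) (hk1 : 1 ≤ k) (hk2 : k ≤ n - 1)
    (δ : ℝ) (hδ : 0 < δ ∧ δ ≤ 1) (F : Finset (Finset (Fin n))) (hF : F ⊆ levelFam n k)
    (m : ℕ) (hm : F.card = m)
    (hsmall : m < Nat.choose ⌊δ * (n : ℝ)⌋₊ ⌊δ * (n : ℝ) / 2⌋₊) :
    (((F.powersetCard 2).filter (fun P =>
        ∃ A ∈ P, ∃ B ∈ P, A ≠ B ∧ (A ∩ B).card = k - 1)).card : ℝ)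
      ≤ δ * m * (n : ℝ) ^ 2 := by
  subst hm
  have sized : ∀ A ∈ F, #A = k := fun A hA ↦ (mem_filter.1 (hF hA)).2
  have small : (#F : ℝ) ≤ 2 ^ (δ * n) :=
    (Nat.cast_le.2 hsmall.le).trans
      (choose_floor_le_two_rpow (mul_nonneg hδ.1.le n.cast_nonneg) _)
  simpa only [Fintype.card_fin] using
    (Nat.cast_le.2 (card_pairs_card_inter_le_card_spannedEdges sized)).trans
      (hamming_edges_bound_general δ F (by rwa [Fintype.card_fin]))
end
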